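/- Let 𝕜 be an algebraically closed field of characteristic zero. Let Ω ∈ 𝕜[x,y,z] be a homogeneous polynomial of degree d ≥ 5 with an isolated singularity, ξ ∈ 𝕜, and let K be a commutative 𝕜-algebra which is a field equipped with a Poisson bracket (a Poisson field over 𝕜). Then the group Aut_{Poi.alg}(K ⊗_𝕜 P_{Ω−ξ} | K) of Poisson 𝕜-algebra automorphisms of K ⊗_𝕜 P_{Ω−ξ} fixing K ⊗ 1 pointwise is finite of order at most 42·d·(d−3)². -/

import Mathlib

open scoped TensorProduct

/-- A Poisson bracket on a commutative algebra `A` over `𝕜`: a bilinear, antisymmetric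
bracket satisfying the Jacobi identity and the Leibniz rule. -/
structure PoissonStructure (𝕜 A : Type*) [CommRing 𝕜] [CommRing A] [Algebra 𝕜 A] where
  bracket : A → A → A
  add_left : ∀ a b c : A, bracket (a + b) c = bracket a c + bracket b c
  smul_left : ∀ (r : 𝕜) (a b : A), bracket (r • a) b = r • bracket a b
  antisymm : ∀ a b : A, bracket a b = - bracket b a
  jacobi : ∀ a b c : A,
    bracket a (bracket b c) + bracket b (bracket c a) + bracket c (bracket a b) = 0
  leibniz : ∀ a b c : A, bracket a (b * c) = bracket a b * c + b * bracket a c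

/-- `f` is a morphism of Poisson algebras. -/
def IsPoissonHom {𝕜 A B : Type*} [CommRing 𝕜] [CommRing A] [CommRing B]
    [Algebra 𝕜 A] [Algebra 𝕜 B]
    (PA : PoissonStructure 𝕜 A) (PB : PoissonStructure 𝕜 B) (f : A →ₐ[𝕜] B) : Prop :=
  ∀ a b : A, f (PA.bracket a b) = PB.bracket (f a) (f b)

/-- A Poisson algebra is Dixmier if every injective Poisson endomorphism is bijective. -/
def IsDixmier (𝕜 A : Type*) [CommRing 𝕜] [CommRing A] [Algebra 𝕜 A]
    (PA : PoissonStructure 𝕜 A) : Prop :=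
  ∀ f : A →ₐ[𝕜] A, IsPoissonHom PA PA f → Function.Injective f → Function.Bijective f

/-- The tensor-product Poisson bracket on `A ⊗[𝕜] B`. -/
def IsTensorBracket {𝕜 A B : Type*} [CommRing 𝕜] [CommRing A] [CommRing B]
    [Algebra 𝕜 A] [Algebra 𝕜 B] (PA : PoissonStructure 𝕜 A) (PB : PoissonStructure 𝕜 B)
    (PT : PoissonStructure 𝕜 (A ⊗[𝕜] B)) : Prop :=
  ∀ (a a' : A) (b b' : B),
    PT.bracket (a ⊗ₜ[𝕜] b) (a' ⊗ₜ[𝕜] b') =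
      PA.bracket a a' ⊗ₜ[𝕜] (b * b') + (a * a') ⊗ₜ[𝕜] PB.bracket b b'

/-- `A` is `R`-Dixmier: every injective Poisson morphism `A → A ⊗ R` has image `A ⊗ 𝕜·1`. -/
def IsRelDixmier (𝕜 A R : Type*) [CommRing 𝕜] [CommRing A] [CommRing R]
    [Algebra 𝕜 A] [Algebra 𝕜 R] (PA : PoissonStructure 𝕜 A)
    (PT : PoissonStructure 𝕜 (A ⊗[𝕜] R)) : Prop :=
  ∀ f : A →ₐ[𝕜] A ⊗[𝕜] R, IsPoissonHom PA PT f → Function.Injective f →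
    Set.range f = Set.range fun a : A => a ⊗ₜ[𝕜] (1 : R)

/-- A Poisson algebra is Poisson simple if its only Poisson ideals are `0` and the whole ring. -/
def IsPoissonSimple {𝕜 A : Type*} [CommRing 𝕜] [CommRing A] [Algebra 𝕜 A]
    (PA : PoissonStructure 𝕜 A) : Prop :=
  ∀ I : Ideal A, (∀ x : A, ∀ y ∈ I, PA.bracket x y ∈ I) → I = ⊥ ∨ I = ⊤

open MvPolynomial in
/-- The Jacobian Poisson bracket with potential `Ω` on `𝕜[x,y,z]`. -/
noncomputable def jacBracket {𝕜 : Type*} [CommRing 𝕜]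
    (Ω f g : MvPolynomial (Fin 3) 𝕜) : MvPolynomial (Fin 3) 𝕜 :=
  Matrix.det (Matrix.of
    ![![pderiv 0 f, pderiv 1 f, pderiv 2 f],
      ![pderiv 0 g, pderiv 1 g, pderiv 2 g],
      ![pderiv 0 Ω, pderiv 1 Ω, pderiv 2 Ω]])

open MvPolynomial in
/-- `Ω` has an isolated singularity at the origin. -/
def HasIsolatedSingularity {𝕜 : Type*} [Field 𝕜] (Ω : MvPolynomial (Fin 3) 𝕜) : Prop :=
  FiniteDimensional 𝕜
    (MvPolynomial (Fin 3) 𝕜 ⧸ Ideal.span {pderiv (0 : Fin 3) Ω, pderiv 1 Ω, pderiv 2 Ω})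

/-- The underlying commutative algebra of `P_{Ω-ξ} = 𝕜[x,y,z]/(Ω-ξ)`. -/
def PQuot (𝕜 : Type*) [CommRing 𝕜] (Ω : MvPolynomial (Fin 3) 𝕜) (ξ : 𝕜) : Type _ :=
  MvPolynomial (Fin 3) 𝕜 ⧸ Ideal.span {Ω - MvPolynomial.C ξ}

noncomputable instance {𝕜 : Type*} [CommRing 𝕜] (Ω : MvPolynomial (Fin 3) 𝕜) (ξ : 𝕜) :
    CommRing (PQuot 𝕜 Ω ξ) :=
  inferInstanceAs (CommRing (MvPolynomial (Fin 3) 𝕜 ⧸ Ideal.span {Ω - MvPolynomial.C ξ}))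

noncomputable instance {𝕜 : Type*} [CommRing 𝕜] (Ω : MvPolynomial (Fin 3) 𝕜) (ξ : 𝕜) :
    Algebra 𝕜 (PQuot 𝕜 Ω ξ) :=
  inferInstanceAs (Algebra 𝕜 (MvPolynomial (Fin 3) 𝕜 ⧸ Ideal.span {Ω - MvPolynomial.C ξ}))

/-- The canonical (surjective) projection `𝕜[x,y,z] → P_{Ω-ξ}`. -/
noncomputable def PQuot.mk {𝕜 : Type*} [CommRing 𝕜] (Ω : MvPolynomial (Fin 3) 𝕜) (ξ : 𝕜)
    (f : MvPolynomial (Fin 3) 𝕜) : PQuot 𝕜 Ω ξ :=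
  Ideal.Quotient.mk (Ideal.span {Ω - MvPolynomial.C ξ}) f

/-- `P` is the Poisson bracket on `P_{Ω-ξ}` induced from the Jacobian bracket on `A_Ω`. -/
def IsInducedBracket {𝕜 : Type*} [CommRing 𝕜] (Ω : MvPolynomial (Fin 3) 𝕜) (ξ : 𝕜)
    (P : PoissonStructure 𝕜 (PQuot 𝕜 Ω ξ)) : Prop :=
  ∀ f g : MvPolynomial (Fin 3) 𝕜,
    P.bracket (PQuot.mk Ω ξ f) (PQuot.mk Ω ξ g) = PQuot.mk Ω ξ (jacBracket Ω f g)

open PiTensorProduct in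
/-- The Poisson bracket on a finite tensor product `⨂[𝕜] i, A i`. -/
def IsPiTensorBracket {𝕜 : Type*} [CommRing 𝕜] {d : ℕ} {A : Fin d → Type*}
    [∀ i, CommRing (A i)] [∀ i, Algebra 𝕜 (A i)]
    (P : ∀ i, PoissonStructure 𝕜 (A i))
    (PT : PoissonStructure 𝕜 (⨂[𝕜] i, A i)) : Prop :=
  ∀ a b : (i : Fin d) → A i,
    PT.bracket (⨂ₜ[𝕜] i, a i) (⨂ₜ[𝕜] i, b i) =
      ∑ i : Fin d,
        ⨂ₜ[𝕜] j, Function.update (fun j => a j * b j) i ((P i).bracket (a i) (b i)) j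

/-- The Poisson-torus bracket associated to a matrix `Λ` on the Laurent polynomial ring
`𝕜[x₁^{±1},…,xₙ^{±1}]`, realized as the group algebra of `ℤⁿ`:
`{x^u, x^v} = (Σ_{i,j} uᵢ λᵢⱼ vⱼ) x^{u+v}`. -/
def IsTorusBracket {𝕜 : Type*} [CommRing 𝕜] (n : ℕ) (Λ : Matrix (Fin n) (Fin n) 𝕜)
    (P : PoissonStructure 𝕜 (AddMonoidAlgebra 𝕜 (Fin n → ℤ))) : Prop :=
  ∀ u v : Fin n → ℤ,
    P.bracket (AddMonoidAlgebra.single u (1 : 𝕜)) (AddMonoidAlgebra.single v (1 : 𝕜)) =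
      (∑ i, ∑ j, (u i : 𝕜) * Λ i j * (v j : 𝕜)) • AddMonoidAlgebra.single (u + v) (1 : 𝕜)

/-- `ν : A → ℤ ∪ {∞}` is a `w`-valuation on the Poisson algebra `A`. -/
structure IsWValuation {𝕜 A : Type*} [CommRing 𝕜] [CommRing A] [Algebra 𝕜 A]
    (P : PoissonStructure 𝕜 A) (w : ℤ) (ν : A → WithTop ℤ) : Prop where
  eq_top_iff : ∀ a : A, ν a = ⊤ ↔ a = 0
  scalar : ∀ c : 𝕜, c ≠ 0 → ν (algebraMap 𝕜 A c) = 0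
  map_mul : ∀ a b : A, ν (a * b) = ν a + ν b
  map_add : ∀ a b : A, min (ν a) (ν b) ≤ ν (a + b)
  map_bracket : ∀ a b : A, ν a + ν b ≤ ν (P.bracket a b) + (w : WithTop ℤ)

/-!
Since `Ω` is homogeneous of degree at least `4`, comparing degrees in the bracket relations shows
that a Poisson automorphism fixing `K` is induced by a linear substitution `M` with
`Ω ∘ M = det M • Ω`. Over an algebraically closed field such matrices form an algebraic group `G`
with trivial Lie algebra, hence a finite group.

The forms of degree `d - 3` are the holomorphic differentials of the smooth plane curve `Ω = 0`, and
a Lefschetz formula relates their character to the fixed points of `G` on the curve. Averaged over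
`G`, Burnside's lemma turns it into the Riemann–Hurwitz formula, and the Hurwitz bound
`84 (g - 1) = 42 d (d - 3)` for the image of `G` in the projective linear group follows. The scalars
in `G` have order dividing `d - 3`.
-/

namespace JacobianPotential

open MvPolynomial Matrix

section Calculus

variable {σ R A : Type*} [CommRing R] [CommRing A] [Algebra R A]

lemma pderiv_comm (i j : σ) (f : MvPolynomial σ R) :
    pderiv i (pderiv j f) = pderiv j (pderiv i f) := by
  classical
  have h : ⁅(pderiv i : Derivation R (MvPolynomial σ R) _), pderiv j⁆ = 0 :=
    derivation_ext fun k => by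
      rw [Derivation.commutator_apply, pderiv_X, pderiv_X]
      simp [Pi.single_apply, apply_ite]
  rw [← sub_eq_zero, ← Derivation.commutator_apply, h, Derivation.zero_apply]

variable [Fintype σ]

lemma derivation_aeval (D : Derivation R A A) (y : σ → A) (f : MvPolynomial σ R) :
    D (aeval y f) = ∑ i, aeval y (pderiv i f) * D (y i) := by
  classical
  induction f using MvPolynomial.induction_on with
  | C a => simp
  | add f g hf hg => simp only [map_add, add_mul, Finset.sum_add_distrib, hf, hg]
  | mul_X f j hf =>
    have hX (i : σ) : aeval y (pderiv i (f * X j)) * D (y i) =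
        (if j = i then aeval y f * D (y i) else 0) + y j * (aeval y (pderiv i f) * D (y i)) := by
      rw [Derivation.leibniz, pderiv_X, Pi.single_apply]
      split_ifs <;> simp [add_mul, mul_assoc]
    rw [map_mul, aeval_X, Derivation.leibniz, hf]
    simp only [hX, Finset.sum_add_distrib, Finset.sum_ite_eq, Finset.mem_univ, if_true,
      smul_eq_mul, Finset.mul_sum]

lemma sum_mul_eval_pderiv {f : MvPolynomial σ R} {n : ℕ} (hf : f.IsHomogeneous n) (v : σ → R) :
    ∑ i, v i * eval v (pderiv i f) = n * eval v f := by
  simpa using congrArg (eval v) hf.sum_X_mul_pderiv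

lemma aeval_X_add_of_mul_eq_zero {h : σ → MvPolynomial σ R} (hh : ∀ i j, h i * h j = 0)
    (f : MvPolynomial σ R) :
    aeval (fun i => X i + h i) f = f + ∑ i, h i * pderiv i f := by
  classical
  induction f using MvPolynomial.induction_on with
  | C a => simp
  | add f g hf hg =>
    simp only [map_add, hf, hg, mul_add, Finset.sum_add_distrib]
    ring
  | mul_X f j hf =>
    have hX : ∑ i, h i * pderiv i (f * X j) = h j * f + (∑ i, h i * pderiv i f) * X j := by
      simp only [Derivation.leibniz, pderiv_X, smul_eq_mul, mul_add, Finset.sum_add_distrib,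
        Pi.single_apply, mul_ite, mul_one, mul_zero, Finset.sum_ite_eq, Finset.mem_univ, if_true,
        Finset.sum_mul]
      congr 1
      exact Finset.sum_congr rfl fun i _ => by ring
    have hj : (∑ i, h i * pderiv i f) * h j = 0 := by
      rw [Finset.sum_mul]
      exact Finset.sum_eq_zero fun i _ => by rw [mul_right_comm, hh, zero_mul]
    rw [map_mul, hf, aeval_X, hX]
    linear_combination hj

end Calculus

section Grading

variable {σ R A : Type*} [CommRing R] [CommRing A] [Algebra R A]

lemma degree_of_mem_support {f : MvPolynomial σ R} {n : ℕ} (hf : f.IsHomogeneous n) {m : σ →₀ ℕ}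
    (hm : m ∈ f.support) : m.degree = n := by
  rw [← hf (mem_support_iff.mp hm)]
  exact DFunLike.congr_fun Finsupp.degree_eq_weight_one m

lemma aeval_mem_graded (𝒜 : ℕ → Submodule R A) [SetLike.GradedMonoid 𝒜] {f : MvPolynomial σ R}
    {n k : ℕ} (hf : f.IsHomogeneous n) {y : σ → A} (hy : ∀ i, y i ∈ 𝒜 k) :
    aeval y f ∈ 𝒜 (n * k) := by
  rw [aeval_def, eval₂_eq]
  refine Submodule.sum_mem _ fun m hm => ?_
  rw [← Algebra.smul_def]
  refine Submodule.smul_mem _ _ ?_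
  have hdeg : ∑ i ∈ m.support, m i • k = n * k := by
    rw [← Finset.sum_smul, ← degree_of_mem_support hf hm, Finsupp.degree_apply, smul_eq_mul]
  rw [← hdeg]
  exact SetLike.prod_mem_graded 𝒜 (fun i => m i • k) _ fun i _ => SetLike.pow_mem_graded _ (hy i)

lemma eval_smul_of_isHomogeneous {f : MvPolynomial σ R} {n : ℕ} (hf : f.IsHomogeneous n) (c : R)
    (v : σ → R) : eval (c • v) f = c ^ n * eval v f := by
  rw [eval_eq, eval_eq, Finset.mul_sum]
  refine Finset.sum_congr rfl fun m hm => ?_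
  have hdeg : ∑ i ∈ m.support, m i = n := by
    rw [← degree_of_mem_support hf hm, Finsupp.degree_apply]
  simp only [Pi.smul_apply, smul_eq_mul, mul_pow, Finset.prod_mul_distrib,
    Finset.prod_pow_eq_pow_sum, hdeg]
  ring

/-- Pairs consisting of a polynomial of degree at most `n` and its coefficient of degree `n`, the
graded pieces of the extended Rees algebra relating a polynomial to its leading coefficient. -/
def leadingCoeffPairs (R : Type*) [CommRing R] (n : ℕ) : Submodule R (Polynomial R × R) where
  carrier := {p | p.1.natDegree ≤ n ∧ p.1.coeff n = p.2}
  add_mem' := fun ⟨ha, ha'⟩ ⟨hb, hb'⟩ =>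
    ⟨Polynomial.natDegree_add_le_of_degree_le ha hb, by simp [ha', hb']⟩
  zero_mem' := by simp
  smul_mem' := fun c _ ⟨ha, ha'⟩ => ⟨(Polynomial.natDegree_smul_le _ _).trans ha, by simp [ha']⟩

instance : SetLike.GradedMonoid (leadingCoeffPairs R) where
  one_mem := ⟨by simp, by simp⟩
  mul_mem := fun _ _ _ _ ⟨ha, ha'⟩ ⟨hb, hb'⟩ =>
    ⟨Polynomial.natDegree_mul_le_of_le ha hb, by
      simp [Polynomial.coeff_mul_add_eq_of_natDegree_le ha hb, ha', hb']⟩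

lemma natDegree_aeval_le_and_coeff_aeval {f : MvPolynomial σ R} {n : ℕ} (hf : f.IsHomogeneous n)
    {c : σ → Polynomial R} {k : ℕ} (hc : ∀ i, (c i).natDegree ≤ k) :
    (aeval c f).natDegree ≤ n * k ∧
      (aeval c f).coeff (n * k) = eval (fun i => (c i).coeff k) f := by
  have h := aeval_mem_graded (leadingCoeffPairs R) hf (y := fun i => (c i, (c i).coeff k))
    fun i => ⟨hc i, rfl⟩
  have h₁ := comp_aeval_apply (fun i => (c i, (c i).coeff k)) (AlgHom.fst R (Polynomial R) R) f
  have h₂ := comp_aeval_apply (fun i => (c i, (c i).coeff k)) (AlgHom.snd R (Polynomial R) R) f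
  exact ⟨h₁ ▸ h.1, (congrArg (Polynomial.coeff · (n * k)) h₁).symm.trans (h.2.trans h₂)⟩

end Grading

section LinearSubstitution

variable {σ τ ρ R : Type*} [Fintype τ] [Fintype ρ] [CommRing R]

/-- The linear substitution `f(x) ↦ f(M x)`, contravariant in `M`. -/
noncomputable def linSubst (M : Matrix σ τ R) : MvPolynomial σ R →ₐ[R] MvPolynomial τ R :=
  bind₁ M.toMvPolynomial

@[simp]
lemma linSubst_X (M : Matrix σ τ R) (i : σ) : linSubst M (X i) = M.toMvPolynomial i :=
  bind₁_X_right _ _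

@[simp]
lemma linSubst_C (M : Matrix σ τ R) (r : R) : linSubst M (C r) = C r :=
  bind₁_C_right _ _

lemma eval_linSubst (M : Matrix σ τ R) (v : τ → R) (f : MvPolynomial σ R) :
    eval v (linSubst M f) = eval (M *ᵥ v) f := by
  have h : (aeval v).comp (linSubst M) = aeval (M *ᵥ v) :=
    algHom_ext fun i => by
      simpa using toMvPolynomial_eval_eq_apply M i v
  exact DFunLike.congr_fun h f

lemma linSubst_mul (M : Matrix σ τ R) (N : Matrix τ ρ R) (f : MvPolynomial σ R) :
    linSubst (M * N) f = linSubst N (linSubst M f) := by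
  have h : linSubst (M * N) = (linSubst N).comp (linSubst M) :=
    algHom_ext fun i => by
      simp [toMvPolynomial_mul, linSubst]
  exact DFunLike.congr_fun h f

@[simp]
lemma linSubst_one [DecidableEq τ] (f : MvPolynomial τ R) :
    linSubst (1 : Matrix τ τ R) f = f := by
  simp [linSubst, toMvPolynomial_one]

lemma isHomogeneous_linSubst (M : Matrix σ τ R) {f : MvPolynomial σ R} {n : ℕ}
    (hf : f.IsHomogeneous n) : (linSubst M f).IsHomogeneous n := by
  simpa [linSubst, aeval_eq_bind₁] using hf.aeval _ M.toMvPolynomial_isHomogeneous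

lemma map_linSubst {S : Type*} [CommRing S] (φ : R →+* S) (M : Matrix σ τ R)
    (f : MvPolynomial σ R) : map φ (linSubst M f) = linSubst (M.map φ) (map φ f) := by
  have h : (M.map φ).toMvPolynomial = fun i => map φ (M.toMvPolynomial i) :=
    funext (toMvPolynomial_map φ M)
  rw [linSubst, map_bind₁, linSubst, h]

lemma pderiv_toMvPolynomial (M : Matrix σ τ R) (i : σ) (j : τ) :
    pderiv j (M.toMvPolynomial i) = C (M i j) := by
  classical
  simp [toMvPolynomial, ← C_mul_X_eq_monomial, pderiv_X, Pi.single_apply]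

lemma pderiv_linSubst [Fintype σ] (M : Matrix σ τ R) (j : τ) (f : MvPolynomial σ R) :
    pderiv j (linSubst M f) = ∑ i, C (M i j) * linSubst M (pderiv i f) := by
  refine (derivation_aeval (pderiv j) M.toMvPolynomial f).trans (Finset.sum_congr rfl fun i _ => ?_)
  rw [pderiv_toMvPolynomial, mul_comm]
  rfl

lemma coeff_linSubst_diagonal [DecidableEq τ] (a : τ → R) (m : τ →₀ ℕ) (f : MvPolynomial τ R) :
    coeff m (linSubst (diagonal a) f) = (∏ i, a i ^ m i) * coeff m f := by
  induction f using MvPolynomial.induction_on' with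
  | add f g hf hg => simp only [map_add, coeff_add, hf, hg, mul_add]
  | monomial n r =>
    have hX (i : τ) : (diagonal a).toMvPolynomial i = C (a i) * X i := by
      simp [toMvPolynomial, diagonal_apply, ← C_mul_X_eq_monomial, apply_ite C, ite_mul]
    have hmon : linSubst (diagonal a) (monomial n r) = C (∏ i, a i ^ n i) * monomial n r := by
      rw [monomial_eq, map_mul, linSubst_C, Finsupp.prod_fintype _ _ fun _ => pow_zero _]
      simp only [map_prod, map_pow, linSubst_X, hX, mul_pow, Finset.prod_mul_distrib]
      ring
    rw [hmon, coeff_C_mul, coeff_monomial]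
    split_ifs with h
    · rw [h]
    · simp

end LinearSubstitution

section Nonsingular

variable {σ L : Type*} [Field L]

/-- The projective hypersurface `Ω = 0` has no rational singular point. -/
def IsNonsingular (Ω : MvPolynomial σ L) : Prop :=
  ∀ v : σ → L, (∀ i, eval v (pderiv i Ω) = 0) → v = 0

lemma IsNonsingular.linSubst [Fintype σ] [DecidableEq σ] {Ω : MvPolynomial σ L}
    (hΩ : IsNonsingular Ω) {P : Matrix σ σ L} (hP : P.det ≠ 0) :
    IsNonsingular (linSubst P Ω) := by
  intro v hv
  have hgrad : (fun i => eval (P *ᵥ v) (pderiv i Ω)) ᵥ* P = 0 := by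
    ext j
    rw [Pi.zero_apply, ← hv j, pderiv_linSubst]
    simp [vecMul, dotProduct, eval_linSubst, mul_comm]
  have hPv := hΩ _ fun i => congrFun (eq_zero_of_vecMul_eq_zero hP hgrad) i
  exact eq_zero_of_mulVec_eq_zero hP hPv

lemma IsNonsingular.ne_zero [Nonempty σ] {Ω : MvPolynomial σ L} (hΩ : IsNonsingular Ω) : Ω ≠ 0 := by
  rintro rfl
  exact one_ne_zero (congrFun (hΩ 1 (by simp)) (Classical.arbitrary σ))

end Nonsingular

section LinearSyzygy

variable {σ R L : Type*} [Fintype σ] [CommRing R] [Field L]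

/-- The linear vector field `N x` annihilates `Ω`, i.e. its coordinates form a linear syzygy of the
partial derivatives of `Ω`. -/
def IsLinearSyzygy (N : Matrix σ σ R) (Ω : MvPolynomial σ R) : Prop :=
  ∑ i, N.toMvPolynomial i * pderiv i Ω = 0

lemma IsLinearSyzygy.sum_mul_pderiv_pderiv {N : Matrix σ σ R} {Ω : MvPolynomial σ R}
    (h : IsLinearSyzygy N Ω) (j : σ) :
    ∑ i, N.toMvPolynomial i * pderiv i (pderiv j Ω) = -∑ i, C (N i j) * pderiv i Ω := by
  have h' := congrArg (pderiv j) h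
  simp only [map_sum, map_zero, Derivation.leibniz, pderiv_toMvPolynomial, smul_eq_mul,
    Finset.sum_add_distrib, pderiv_comm j] at h'
  rw [eq_neg_iff_add_eq_zero, ← h']
  simp only [mul_comm]

/-- The gradient at an eigenvector of `N` is an eigenvector of `Nᵀ`. -/
lemma IsLinearSyzygy.isRoot_charpoly_neg_mul [DecidableEq σ] {Ω : MvPolynomial σ L} {d : ℕ}
    (hom : Ω.IsHomogeneous d) (hΩ : IsNonsingular Ω) {N : Matrix σ σ L} (h : IsLinearSyzygy N Ω)
    {a : L} (ha : N.charpoly.IsRoot a) : N.charpoly.IsRoot (-(d - 1 : ℕ) * a) := by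
  rw [Polynomial.IsRoot, eval_charpoly] at ha ⊢
  obtain ⟨v, hv, hNv⟩ := exists_mulVec_eq_zero_iff.2 ha
  refine exists_vecMul_eq_zero_iff.1
    ⟨fun i => eval v (pderiv i Ω), fun h0 => hv (hΩ v fun j => congrFun h0 j), ?_⟩
  have hN : N *ᵥ v = a • v := by
    rw [sub_mulVec, sub_eq_zero] at hNv
    rw [← hNv, scalar_apply, ← smul_one_eq_diagonal, smul_mulVec, one_mulVec]
  ext j
  have hgrad := congrArg (eval v) (h.sum_mul_pderiv_pderiv j)
  simp only [map_sum, map_mul, map_neg, eval_C, toMvPolynomial_eval_eq_apply, hN, Pi.smul_apply,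
    smul_eq_mul, mul_assoc, ← Finset.mul_sum, sum_mul_eval_pderiv hom.pderiv] at hgrad
  rw [vecMul_sub, scalar_apply, ← smul_one_eq_diagonal, vecMul_smul, vecMul_one]
  simp only [Pi.sub_apply, Pi.smul_apply, smul_eq_mul, vecMul, dotProduct, Pi.zero_apply]
  simp only [mul_comm _ (N _ j)]
  linear_combination -hgrad

end LinearSyzygy

section Nilpotent

variable {σ L : Type*} [Fintype σ] [DecidableEq σ] [Field L]

lemma isNilpotent_of_charpoly_roots_eq_zero [IsAlgClosed L] {N : Matrix σ σ L}
    (h : ∀ a, N.charpoly.IsRoot a → a = 0) : IsNilpotent N := by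
  obtain ⟨k, hk⟩ : ∃ k, N.charpoly.roots = Multiset.replicate k 0 :=
    ⟨_, Multiset.eq_replicate_card.2 fun a ha => h a (Polynomial.isRoot_of_mem_roots ha)⟩
  have hcharpoly : N.charpoly = Polynomial.X ^ k := by
    simpa [hk] using (IsAlgClosed.splits N.charpoly).eq_prod_roots_of_monic N.charpoly_monic
  refine ⟨k, ?_⟩
  simpa [hcharpoly] using N.aeval_self_charpoly

/-- The curve `t ↦ exp(t N) v`, truncated at the order `m` of nilpotency of `N`. -/
noncomputable def expCurve (N : Matrix σ σ L) (m : ℕ) (v : σ → L) (i : σ) : Polynomial L :=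
  ∑ n ∈ Finset.range m, Polynomial.monomial n ((n.factorial : L)⁻¹ * (N ^ n *ᵥ v) i)

variable {N : Matrix σ σ L} {m : ℕ}

lemma coeff_expCurve (hN : N ^ m = 0) (v : σ → L) (i : σ) (n : ℕ) :
    (expCurve N m v i).coeff n = (n.factorial : L)⁻¹ * (N ^ n *ᵥ v) i := by
  rw [expCurve, Polynomial.finsetSum_coeff]
  simp only [Polynomial.coeff_monomial, Finset.sum_ite_eq', Finset.mem_range, ite_eq_left_iff,
    not_lt]
  intro hn
  simp [pow_eq_zero_of_le hn hN]

variable [CharZero L]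

lemma derivative_expCurve (hN : N ^ m = 0) (v : σ → L) (i : σ) :
    Polynomial.derivative (expCurve N m v i) =
      aeval (expCurve N m v) (N.toMvPolynomial i) := by
  ext n
  have hn : (n + 1 : L) ≠ 0 := n.cast_add_one_ne_zero
  have hpow (j : σ) : (N ^ (n + 1) *ᵥ v) j = ∑ l, N j l * (N ^ n *ᵥ v) l := by
    rw [pow_succ', ← mulVec_mulVec]
    rfl
  have hlin : aeval (expCurve N m v) (N.toMvPolynomial i) =
      ∑ j, Polynomial.C (N i j) * expCurve N m v j := by
    simp [toMvPolynomial, ← C_mul_X_eq_monomial, Polynomial.C_eq_algebraMap]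
  simp only [hlin, Polynomial.coeff_derivative, Polynomial.finsetSum_coeff,
    Polynomial.coeff_C_mul, coeff_expCurve hN, Nat.factorial_succ, Nat.cast_mul, Nat.cast_succ,
    hpow, Finset.mul_sum, Finset.sum_mul]
  exact Finset.sum_congr rfl fun j _ => by field_simp

lemma IsLinearSyzygy.iterate_derivative_aeval_expCurve {Ω : MvPolynomial σ L}
    (h : IsLinearSyzygy N Ω) (hN : N ^ m = 0) (v : σ → L) (j : σ) (n : ℕ) :
    Polynomial.derivative^[n] (aeval (expCurve N m v) (pderiv j Ω)) =
      ∑ i, Polynomial.C (((-N) ^ n) i j) * aeval (expCurve N m v) (pderiv i Ω) := by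
  have hderiv (j : σ) : Polynomial.derivative (aeval (expCurve N m v) (pderiv j Ω)) =
      ∑ i, Polynomial.C ((-N) i j) * aeval (expCurve N m v) (pderiv i Ω) := by
    have hj := congrArg (aeval (expCurve N m v)) (h.sum_mul_pderiv_pderiv j)
    simp only [map_sum, map_mul, map_neg, aeval_C, ← derivative_expCurve hN] at hj
    refine (derivation_aeval Polynomial.derivative' _ _).trans ?_
    simp only [Polynomial.derivative'_apply, mul_comm (aeval _ _), hj]
    simp
  induction n with
  | zero => simp [one_apply, apply_ite Polynomial.C]
  | succ n ih =>
    simp only [Function.iterate_succ_apply', ih, map_sum, Polynomial.derivative_C_mul, hderiv,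
      pow_succ' (-N) n, mul_apply, Finset.mul_sum, Finset.sum_mul]
    rw [Finset.sum_comm]
    exact Finset.sum_congr rfl fun i _ => Finset.sum_congr rfl fun l _ => by
      rw [Polynomial.C_mul]; ring

end Nilpotent

section LinearSyzygy

variable {σ L : Type*} [Fintype σ] [Field L] [CharZero L]
  {Ω : MvPolynomial σ L} {d : ℕ} {N : Matrix σ σ L}

/-- Along `exp(t N) v` the gradient of `Ω` evolves by `-Nᵀ`, hence has degree less than `k + 1` in
`t`; but its coefficient of degree `(d - 1) k` is the gradient at `N ^ k v / k!`. -/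
lemma IsLinearSyzygy.pow_eq_zero_of_pow_succ_eq_zero [DecidableEq σ] (hom : Ω.IsHomogeneous d)
    (hd : 3 ≤ d) (hΩ : IsNonsingular Ω) (h : IsLinearSyzygy N Ω) {k : ℕ} (hk : 1 ≤ k)
    (hN : N ^ (k + 1) = 0) : N ^ k = 0 := by
  refine ext_iff_mulVec.2 fun v => ?_
  have hdeg (i : σ) : (expCurve N (k + 1) v i).natDegree ≤ k :=
    Polynomial.natDegree_le_iff_coeff_eq_zero.2 fun n hn => by
      simp [coeff_expCurve hN, pow_eq_zero_of_le (Nat.succ_le_of_lt hn) hN]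
  have hlarge : k + 1 ≤ (d - 1) * k := by
    nlinarith [Nat.mul_le_mul_right k (show 2 ≤ d - 1 by omega)]
  have hgrad (j : σ) :
      (aeval (expCurve N (k + 1) v) (pderiv j Ω)).coeff ((d - 1) * k) = 0 := by
    have hj := congrArg (Polynomial.coeff · ((d - 1) * k - (k + 1)))
      (h.iterate_derivative_aeval_expCurve hN v j (k + 1))
    rw [neg_pow, hN] at hj
    simp only [mul_zero, Matrix.zero_apply, map_zero, zero_mul, Finset.sum_const_zero,
      Polynomial.coeff_zero, Polynomial.coeff_iterate_derivative, Nat.sub_add_cancel hlarge,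
      smul_eq_zero, Nat.descFactorial_eq_zero_iff_lt] at hj
    exact hj.resolve_left hlarge.not_gt
  have hzero := hΩ _ fun j =>
    (natDegree_aeval_le_and_coeff_aeval hom.pderiv hdeg).2.symm.trans (hgrad j)
  ext i
  simpa [coeff_expCurve hN, k.factorial_ne_zero] using congrFun hzero i

lemma IsLinearSyzygy.eq_zero_of_isNilpotent [DecidableEq σ] (hom : Ω.IsHomogeneous d) (hd : 3 ≤ d)
    (hΩ : IsNonsingular Ω) (h : IsLinearSyzygy N Ω) (hN : IsNilpotent N) : N = 0 := by
  obtain ⟨m, hm⟩ := hN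
  have hpow (k : ℕ) (hk : N ^ (k + 1) = 0) : N ^ 1 = 0 := by
    induction k with
    | zero => exact hk
    | succ k ih => exact ih (h.pow_eq_zero_of_pow_succ_eq_zero hom hd hΩ k.succ_pos hk)
  simpa using hpow m (pow_eq_zero_of_le m.le_succ hm)

theorem IsLinearSyzygy.eq_zero [IsAlgClosed L] (hom : Ω.IsHomogeneous d) (hd : 3 ≤ d)
    (hΩ : IsNonsingular Ω) (h : IsLinearSyzygy N Ω) : N = 0 := by
  classical
  refine h.eq_zero_of_isNilpotent hom hd hΩ (isNilpotent_of_charpoly_roots_eq_zero fun a ha => ?_)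
  by_contra ha0
  have hroot (k : ℕ) : N.charpoly.IsRoot ((-(d - 1 : ℕ)) ^ k * a) := by
    induction k with
    | zero => simpa using ha
    | succ k ih =>
      rw [pow_succ', mul_assoc]
      exact h.isRoot_charpoly_neg_mul hom hΩ ih
  have hinj : Function.Injective fun k : ℕ => (-(d - 1 : ℕ) : L) ^ k * a := by
    intro k l hkl
    have hkl' : (-(d - 1 : ℕ) : ℤ) ^ k = (-(d - 1 : ℕ) : ℤ) ^ l := by
      exact_mod_cast mul_right_cancel₀ ha0 hkl
    have hnat := congrArg Int.natAbs hkl'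
    simp only [Int.natAbs_pow, Int.natAbs_neg, Int.natAbs_natCast] at hnat
    exact Nat.pow_right_injective (show 2 ≤ d - 1 by omega) hnat
  exact Set.infinite_range_of_injective hinj <|
    (Polynomial.finite_setOfPred_isRoot N.charpoly_monic.ne_zero).subset
      (Set.range_subset_iff.2 hroot)

lemma eq_zero_of_sum_toMvPolynomial_mul_pderiv_eq_trace_mul [IsAlgClosed L]
    (hom : Ω.IsHomogeneous d) (hd : 3 ≤ d) (hcard : d ≠ Fintype.card σ) (hΩ : IsNonsingular Ω)
    (h : ∑ i, N.toMvPolynomial i * pderiv i Ω = C N.trace * Ω) : N = 0 := by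
  classical
  have hd0 : (d : L) ≠ 0 := Nat.cast_ne_zero.2 (by omega)
  have hsyz : IsLinearSyzygy (N - (N.trace / d) • (1 : Matrix σ σ L)) Ω := by
    have hform (i : σ) : (N - (N.trace / d) • (1 : Matrix σ σ L)).toMvPolynomial i =
        N.toMvPolynomial i - C (N.trace / d) * X i := by
      simp [toMvPolynomial, Matrix.sub_apply, ← C_mul_X_eq_monomial, sub_mul, one_apply,
        apply_ite C, ite_mul]
    simp only [IsLinearSyzygy, hform, sub_mul, Finset.sum_sub_distrib, h, mul_assoc,
      ← Finset.mul_sum, hom.sum_X_mul_pderiv, nsmul_eq_mul]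
    rw [← mul_assoc, ← map_natCast (C : L →+* MvPolynomial σ L), ← C_mul, div_mul_cancel₀ _ hd0,
      sub_self]
  have hscalar := sub_eq_zero.1 (hsyz.eq_zero hom hd hΩ)
  have htrace : N.trace * d = N.trace * Fintype.card σ := by
    have ht := congrArg trace hscalar
    rw [trace_smul, trace_one, smul_eq_mul] at ht
    field_simp at ht
    exact ht
  have htrace0 : N.trace = 0 := by
    by_contra hne
    exact hcard (Nat.cast_injective (mul_left_cancel₀ hne htrace))
  rw [hscalar, htrace0, zero_div, zero_smul]

end LinearSyzygy

section Determinant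

variable {σ R : Type*} [Fintype σ] [DecidableEq σ] [CommRing R]

lemma det_one_add_of_mul_eq_zero {N : Matrix σ σ R} (hN : ∀ i j k l, N i j * N k l = 0) :
    (1 + N).det = 1 + N.trace := by
  have hprod (s : Finset σ) : ∏ i ∈ s, (1 + N i i) = 1 + ∑ i ∈ s, N i i := by
    induction s using Finset.induction_on with
    | empty => simp
    | insert i s hi ih =>
      have hcross : N i i * ∑ j ∈ s, N j j = 0 := by simp [Finset.mul_sum, hN]
      rw [Finset.prod_insert hi, Finset.sum_insert hi, ih]
      linear_combination hcross
  rw [det_apply, Finset.sum_eq_single_of_mem 1 (Finset.mem_univ _)]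
  · simp [hprod, trace]
  intro π _ hπ
  obtain ⟨i, hi⟩ : ∃ i, π i ≠ i := by simpa [Equiv.ext_iff] using hπ
  have hi' : π (π i) ≠ π i := fun h => hi (π.injective h)
  have hdvd := Finset.prod_dvd_prod_of_subset {i, π i} Finset.univ (fun j => (1 + N) (π j) j)
    (Finset.subset_univ _)
  rw [Finset.prod_pair hi.symm, Matrix.add_apply, Matrix.add_apply, one_apply_ne hi,
    one_apply_ne hi', zero_add, zero_add, hN, zero_dvd_iff] at hdvd
  rw [hdvd, smul_zero]

end Determinant

section PreservesUpToDet

variable {σ R : Type*} [Fintype σ] [DecidableEq σ] [CommRing R]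

/-- `Ω` is invariant under `M` up to the factor `det M`; for three variables this says that the
substitution by `M` respects the Jacobian bracket with potential `Ω`. -/
def PreservesUpToDet (Ω : MvPolynomial σ R) (M : Matrix σ σ R) : Prop :=
  linSubst M Ω = C M.det * Ω

variable {Ω : MvPolynomial σ R} {A B : Matrix σ σ R}

lemma PreservesUpToDet.one : PreservesUpToDet Ω 1 := by
  simp [PreservesUpToDet]

lemma PreservesUpToDet.mul (hA : PreservesUpToDet Ω A) (hB : PreservesUpToDet Ω B) :
    PreservesUpToDet Ω (A * B) := by
  rw [PreservesUpToDet, linSubst_mul, hA, map_mul, hB, linSubst_C, det_mul, C_mul, mul_assoc]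

lemma PreservesUpToDet.of_mul_eq_one (hA : PreservesUpToDet Ω A) (hAB : A * B = 1) :
    PreservesUpToDet Ω B := by
  have hΩ : C A.det * linSubst B Ω = Ω := by
    rw [← linSubst_C B, ← map_mul, ← hA, ← linSubst_mul, hAB, linSubst_one]
  have hdet : (C B.det * C A.det : MvPolynomial σ R) = 1 := by
    rw [← C_mul, mul_comm, ← det_mul, hAB, det_one, C_1]
  rw [PreservesUpToDet]
  linear_combination C B.det * hΩ - linSubst B Ω * hdet

lemma PreservesUpToDet.map {S : Type*} [CommRing S] (φ : R →+* S) (hA : PreservesUpToDet Ω A) :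
    PreservesUpToDet (MvPolynomial.map φ Ω) (A.map φ) := by
  rw [PreservesUpToDet, ← map_linSubst, hA, map_mul, map_C, RingHom.map_det]
  rfl

end PreservesUpToDet

section Rigidity

variable {σ R L : Type*} [Fintype σ] [CommRing R] [Field L] [Algebra L R]

lemma coeff_toMvPolynomial_mul_map (N : Matrix σ σ R) (i : σ) (f : MvPolynomial σ L) (m : σ →₀ ℕ) :
    coeff m (N.toMvPolynomial i * MvPolynomial.map (algebraMap L R) f) =
      ∑ j, coeff m (X j * f) • N i j := by
  simp only [toMvPolynomial, ← C_mul_X_eq_monomial, Finset.sum_mul, coeff_sum, mul_assoc,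
    coeff_C_mul, ← map_X (algebraMap L R), ← map_mul, coeff_map]
  simp only [Algebra.smul_def, mul_comm]

lemma sum_toMvPolynomial_mul_pderiv_map_dual {Ω : MvPolynomial σ L} {N : Matrix σ σ R}
    (h : ∑ i, N.toMvPolynomial i * pderiv i (MvPolynomial.map (algebraMap L R) Ω) =
      C N.trace * MvPolynomial.map (algebraMap L R) Ω) (l : R →ₗ[L] L) :
    ∑ i, (N.map l).toMvPolynomial i * pderiv i Ω = C (N.map l).trace * Ω := by
  ext m
  have hm := congrArg (fun f => l (coeff m f)) h
  have hid (i : σ) : coeff m ((N.map l).toMvPolynomial i * pderiv i Ω) =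
      ∑ j, coeff m (X j * pderiv i Ω) • l (N i j) := by
    simpa [Algebra.algebraMap_self, MvPolynomial.map_id] using
      coeff_toMvPolynomial_mul_map (N.map l) i (pderiv i Ω) m
  simp only [pderiv_map, coeff_sum, coeff_toMvPolynomial_mul_map, coeff_C_mul, coeff_map,
    map_sum, map_smul] at hm
  rw [mul_comm, ← Algebra.smul_def, map_smul] at hm
  simp only [coeff_sum, hid, hm, coeff_C_mul]
  simp [trace, mul_comm]

variable [DecidableEq σ] [CharZero L] [IsAlgClosed L] {Ω : MvPolynomial σ L} {d : ℕ}

lemma PreservesUpToDet.eq_zero_of_one_add (hom : Ω.IsHomogeneous d) (hd : 3 ≤ d)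
    (hcard : d ≠ Fintype.card σ) (hΩ : IsNonsingular Ω) {N : Matrix σ σ R}
    (hN : ∀ i j k l, N i j * N k l = 0)
    (h : PreservesUpToDet (MvPolynomial.map (algebraMap L R) Ω) (1 + N)) : N = 0 := by
  have hmul (i j : σ) : N.toMvPolynomial i * N.toMvPolynomial j = 0 := by
    simp [toMvPolynomial, Finset.sum_mul_sum, hN]
  have htaylor : linSubst (1 + N) (MvPolynomial.map (algebraMap L R) Ω) =
      MvPolynomial.map (algebraMap L R) Ω +
        ∑ i, N.toMvPolynomial i * pderiv i (MvPolynomial.map (algebraMap L R) Ω) := by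
    rw [← aeval_X_add_of_mul_eq_zero hmul, linSubst, toMvPolynomial_add, toMvPolynomial_one]
    rfl
  rw [PreservesUpToDet, htaylor, det_one_add_of_mul_eq_zero hN, C_add, C_1, add_mul, one_mul,
    add_right_inj] at h
  ext i j
  refine (Module.forall_dual_apply_eq_zero_iff L (N i j)).1 fun l => ?_
  exact congrFun₂ (eq_zero_of_sum_toMvPolynomial_mul_pderiv_eq_trace_mul hom hd hcard hΩ
    (sum_toMvPolynomial_mul_pderiv_map_dual h l)) i j

lemma PreservesUpToDet.eq_of_sub_mem (hom : Ω.IsHomogeneous d) (hd : 3 ≤ d)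
    (hcard : d ≠ Fintype.card σ) (hΩ : IsNonsingular Ω) {I : Ideal R} (hI : I ^ 2 = ⊥)
    {A B : Matrix σ σ R} (hA : PreservesUpToDet (MvPolynomial.map (algebraMap L R) Ω) A)
    (hB : PreservesUpToDet (MvPolynomial.map (algebraMap L R) Ω) B) (hdet : IsUnit A.det)
    (hAB : ∀ i j, A i j - B i j ∈ I) : A = B := by
  have hmem (i j : σ) : (A⁻¹ * (B - A)) i j ∈ I := by
    rw [mul_apply]
    refine I.sum_mem fun k _ => I.mul_mem_left _ ?_
    rw [Matrix.sub_apply, ← neg_sub]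
    exact I.neg_mem (hAB k j)
  have hsq (i j k l : σ) : (A⁻¹ * (B - A)) i j * (A⁻¹ * (B - A)) k l = 0 := by
    rw [← Ideal.mem_bot, ← hI, sq]
    exact Ideal.mul_mem_mul (hmem i j) (hmem k l)
  have hquot : A⁻¹ * B = 1 + A⁻¹ * (B - A) := by
    rw [mul_sub, nonsing_inv_mul A hdet, add_sub_cancel]
  have hzero := PreservesUpToDet.eq_zero_of_one_add hom hd hcard hΩ hsq
    (hquot ▸ (hA.of_mul_eq_one (mul_nonsing_inv A hdet)).mul hB)
  rw [hzero, add_zero] at hquot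
  rw [← mul_one A, ← hquot, mul_nonsing_inv_cancel_left A B hdet]

end Rigidity

section Finiteness

variable {σ L : Type*} [Fintype σ] [DecidableEq σ] [Field L]

/-- The generic matrix over `L[xᵢⱼ, t]`; the additional variable `t = X none` is there to become the
inverse of its determinant. -/
noncomputable def genericMatrix (σ L : Type*) [Field L] :
    Matrix σ σ (MvPolynomial (Option (σ × σ)) L) :=
  Matrix.of fun i j => X (some (i, j))

/-- The equations, in the entries of the generic matrix, of the group scheme of invertible matrices
preserving `Ω` up to the determinant. -/
noncomputable def preservingIdeal (Ω : MvPolynomial σ L) :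
    Ideal (MvPolynomial (Option (σ × σ)) L) :=
  Ideal.span (Set.range (fun m => coeff m
      (linSubst (genericMatrix σ L) (MvPolynomial.map (algebraMap L _) Ω) -
        C (genericMatrix σ L).det * MvPolynomial.map (algebraMap L _) Ω)) ∪
    {(genericMatrix σ L).det * X none - 1})

lemma preservingIdeal_le_ker_iff (Ω : MvPolynomial σ L) {R : Type*} [CommRing R] [Algebra L R]
    (φ : MvPolynomial (Option (σ × σ)) L →ₐ[L] R) :
    preservingIdeal Ω ≤ RingHom.ker φ ↔
      PreservesUpToDet (MvPolynomial.map (algebraMap L R) Ω) ((genericMatrix σ L).map φ) ∧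
        ((genericMatrix σ L).map φ).det * φ (X none) = 1 := by
  have hdet : φ (genericMatrix σ L).det = ((genericMatrix σ L).map φ).det := φ.map_det _
  have hmap : MvPolynomial.map (φ : _ →+* R)
        (linSubst (genericMatrix σ L) (MvPolynomial.map (algebraMap L _) Ω) -
          C (genericMatrix σ L).det * MvPolynomial.map (algebraMap L _) Ω) =
      linSubst ((genericMatrix σ L).map φ) (MvPolynomial.map (algebraMap L R) Ω) -
        C ((genericMatrix σ L).map φ).det * MvPolynomial.map (algebraMap L R) Ω := by
    rw [map_sub, map_linSubst, map_mul, map_C, MvPolynomial.map_map, φ.comp_algebraMap, ← hdet]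
    rfl
  rw [preservingIdeal, Ideal.span_le, Set.union_subset_iff, Set.range_subset_iff,
    Set.singleton_subset_iff, PreservesUpToDet, ← sub_eq_zero, ← hmap, MvPolynomial.ext_iff]
  refine and_congr (forall_congr' fun m => ?_) ?_
  · rw [coeff_map, coeff_zero]
    rfl
  · rw [SetLike.mem_coe, RingHom.mem_ker, map_sub, map_mul, hdet, map_one, sub_eq_zero]

variable [CharZero L] [IsAlgClosed L] {Ω : MvPolynomial σ L} {d : ℕ}

lemma formallyUnramified_quotient_preservingIdeal (hom : Ω.IsHomogeneous d) (hd : 3 ≤ d)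
    (hcard : d ≠ Fintype.card σ) (hΩ : IsNonsingular Ω) :
    Algebra.FormallyUnramified L (MvPolynomial (Option (σ × σ)) L ⧸ preservingIdeal Ω) := by
  rw [Algebra.FormallyUnramified.iff_comp_injective]
  intro R _ _ I hI f g hfg
  have hker (e : MvPolynomial (Option (σ × σ)) L ⧸ preservingIdeal Ω →ₐ[L] R) :=
    (preservingIdeal_le_ker_iff Ω (e.comp (Ideal.Quotient.mkₐ L (preservingIdeal Ω)))).1
      fun a ha => by
        rw [RingHom.mem_ker, AlgHom.comp_apply, Ideal.Quotient.mkₐ_eq_mk,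
          Ideal.Quotient.eq_zero_iff_mem.2 ha, map_zero]
  obtain ⟨hf, hfdet⟩ := hker f
  obtain ⟨hg, hgdet⟩ := hker g
  have hunit := IsUnit.of_mul_eq_one _ hfdet
  have hM := hf.eq_of_sub_mem hom hd hcard hΩ hI hg hunit fun i j =>
    Ideal.Quotient.eq.1 (DFunLike.congr_fun hfg _)
  refine Ideal.Quotient.algHom_ext _ (MvPolynomial.algHom_ext ?_)
  rintro (_ | ⟨i, j⟩)
  · exact hunit.mul_left_cancel (hfdet.trans (hM ▸ hgdet).symm)
  · exact congrFun₂ hM i j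

theorem finite_setOf_preservesUpToDet (hom : Ω.IsHomogeneous d) (hd : 3 ≤ d)
    (hcard : d ≠ Fintype.card σ) (hΩ : IsNonsingular Ω) :
    {M : Matrix σ σ L | M.det ≠ 0 ∧ PreservesUpToDet Ω M}.Finite := by
  have := formallyUnramified_quotient_preservingIdeal hom hd hcard hΩ
  have : Algebra.FiniteType L (MvPolynomial (Option (σ × σ)) L ⧸ preservingIdeal Ω) :=
    Algebra.FiniteType.of_surjective _ (Ideal.Quotient.mkₐ_surjective L (preservingIdeal Ω))
  have := Algebra.FormallyUnramified.finite_of_free L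
    (MvPolynomial (Option (σ × σ)) L ⧸ preservingIdeal Ω)
  refine (Set.finite_range fun φ : MvPolynomial (Option (σ × σ)) L ⧸ preservingIdeal Ω →ₐ[L] L =>
    (genericMatrix σ L).map (φ.comp (Ideal.Quotient.mkₐ L (preservingIdeal Ω)))).subset ?_
  rintro M ⟨hdet, hM⟩
  let φ : MvPolynomial (Option (σ × σ)) L →ₐ[L] L :=
    aeval fun o => o.elim M.det⁻¹ fun p => M p.1 p.2
  have hφ : (genericMatrix σ L).map φ = M := by
    ext i j
    simp [genericMatrix, φ]
  have hker : preservingIdeal Ω ≤ RingHom.ker φ := by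
    rw [preservingIdeal_le_ker_iff, hφ, Algebra.algebraMap_self, MvPolynomial.map_id]
    exact ⟨hM, by simp [φ, hdet]⟩
  exact ⟨Ideal.Quotient.liftₐ _ φ hker, hφ⟩

end Finiteness

section CompleteHomogeneous

variable {ι R : Type*} [Fintype ι] [CommRing R]

/-- The complete homogeneous symmetric polynomial of degree `n` at `a`, encoded as the `n`-th
coefficient of `∏ i, 1 / (1 - a i T)`. -/
noncomputable def completeHomogeneous (a : ι → R) (n : ℕ) : R :=
  PowerSeries.coeff n (∏ i, PowerSeries.mk fun k => a i ^ k)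

lemma completeHomogeneous_eq_sum [DecidableEq ι] (a : ι → R) (n : ℕ) :
    completeHomogeneous a n = ∑ m ∈ Finset.univ.finsuppAntidiag n, ∏ i, a i ^ m i := by
  simp [completeHomogeneous, PowerSeries.coeff_prod]

lemma completeHomogeneous_zero (a : ι → R) : completeHomogeneous a 0 = 1 := by
  simp [completeHomogeneous, map_prod]

lemma completeHomogeneous_vecCons_succ {k : ℕ} (x : R) (a : Fin k → R) (n : ℕ) :
    completeHomogeneous (vecCons x a) (n + 1) =
      x * completeHomogeneous (vecCons x a) n + completeHomogeneous a (n + 1) := by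
  have hgeom : PowerSeries.mk (fun k => x ^ k) =
      1 + PowerSeries.X * PowerSeries.C x * PowerSeries.mk (fun k => x ^ k) := by
    ext (_ | j)
    · simp
    · simp [mul_assoc, PowerSeries.coeff_succ_X_mul, PowerSeries.coeff_one, pow_succ']
  simp only [completeHomogeneous, Fin.prod_univ_succ, cons_val_zero, cons_val_succ]
  conv_lhs => rw [hgeom]
  rw [add_mul, one_mul, map_add, mul_assoc, mul_assoc, PowerSeries.coeff_succ_X_mul,
    PowerSeries.coeff_C_mul, add_comm]

lemma sub_mul_completeHomogeneous {k : ℕ} (x y : R) (a : Fin k → R) (n : ℕ) :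
    (x - y) * completeHomogeneous (vecCons x (vecCons y a)) n =
      completeHomogeneous (vecCons x a) (n + 1) - completeHomogeneous (vecCons y a) (n + 1) := by
  induction n with
  | zero =>
    rw [completeHomogeneous_vecCons_succ, completeHomogeneous_vecCons_succ]
    simp only [completeHomogeneous_zero]
    ring
  | succ n ih =>
    rw [completeHomogeneous_vecCons_succ x (vecCons y a), completeHomogeneous_vecCons_succ x a,
      completeHomogeneous_vecCons_succ y a (n + 1)]
    linear_combination x * ih

lemma completeHomogeneous_singleton (x : R) (n : ℕ) : completeHomogeneous ![x] n = x ^ n := by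
  simp [completeHomogeneous]

lemma completeHomogeneous_pair_self (x : R) (n : ℕ) :
    completeHomogeneous ![x, x] n = (n + 1) * x ^ n := by
  induction n with
  | zero => simp [completeHomogeneous_zero]
  | succ n ih =>
    rw [completeHomogeneous_vecCons_succ, ih, completeHomogeneous_singleton]
    push_cast
    ring

lemma two_mul_completeHomogeneous_triple_self (x : R) (n : ℕ) :
    2 * completeHomogeneous ![x, x, x] n = (n + 1) * (n + 2) * x ^ n := by
  induction n with
  | zero => simp [completeHomogeneous_zero]
  | succ n ih =>
    rw [completeHomogeneous_vecCons_succ, completeHomogeneous_pair_self]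
    push_cast
    linear_combination x * ih

lemma mul_completeHomogeneous_triple (x y z : R) (n : ℕ) :
    (x - y) * (x - z) * (y - z) * completeHomogeneous ![x, y, z] n =
      x ^ (n + 2) * (y - z) - y ^ (n + 2) * (x - z) + z ^ (n + 2) * (x - y) := by
  have hxz := sub_mul_completeHomogeneous x z ![] (n + 1)
  have hyz := sub_mul_completeHomogeneous y z ![] (n + 1)
  simp only [completeHomogeneous_singleton] at hxz hyz
  linear_combination (x - z) * (y - z) * sub_mul_completeHomogeneous x y ![z] n +
    (y - z) * hxz - (x - z) * hyz

lemma sq_mul_completeHomogeneous_triple (x z : R) (n : ℕ) :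
    (x - z) ^ 2 * completeHomogeneous ![x, z, z] n =
      x ^ (n + 2) - (n + 2) * x * z ^ (n + 1) + (n + 1) * z ^ (n + 2) := by
  have hxz := sub_mul_completeHomogeneous x z ![] (n + 1)
  have hzz := completeHomogeneous_pair_self z (n + 1)
  push_cast at hzz
  simp only [completeHomogeneous_singleton] at hxz
  linear_combination (x - z) * sub_mul_completeHomogeneous x z ![z] n + hxz - (x - z) * hzz

end CompleteHomogeneous

section FormRepresentation

variable {σ L : Type*} [Fintype σ] [DecidableEq σ] [Field L]

variable (σ L) in
/-- The representation of `GL` on forms of degree `n`, with `g` acting by substitution of `g⁻¹`. -/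
noncomputable def formRep (n : ℕ) :
    Representation L (GL σ L) (homogeneousSubmodule σ L n) where
  toFun g := (linSubst (g⁻¹ : GL σ L).val).toLinearMap.restrict fun _ => isHomogeneous_linSubst _
  map_one' := by
    ext f : 2
    simp
  map_mul' g h := by
    ext f : 2
    simp [linSubst_mul]

lemma coe_formRep_apply (n : ℕ) (g : GL σ L) (f : homogeneousSubmodule σ L n) :
    (formRep σ L n g f : MvPolynomial σ L) = linSubst (g⁻¹ : GL σ L).val f :=
  rfl

instance {σ : Type*} [Finite σ] (n : ℕ) : FiniteDimensional L (homogeneousSubmodule σ L n) :=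
  Module.Finite.iff_fg.2 (homogeneousSubmodule_fg σ L n)

lemma homogeneousSubmodule_eq_restrictSupport (n : ℕ) :
    restrictSupport L (Finset.finsuppAntidiag (Finset.univ : Finset σ) n : Set (σ →₀ ℕ)) =
      homogeneousSubmodule σ L n := by
  have hset : (Finset.finsuppAntidiag (Finset.univ : Finset σ) n : Set (σ →₀ ℕ)) =
      {m | m.degree = n} := by
    ext m
    simp [Finsupp.degree_eq_sum]
  rw [hset, homogeneousSubmodule_eq_finsupp_supported]
  rfl

lemma character_formRep_of_inv_eq_diagonal {n : ℕ} {g : GL σ L} {a : σ → L}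
    (hg : (g⁻¹ : GL σ L).val = diagonal a) :
    (formRep σ L n).character g = completeHomogeneous a n := by
  let b := (basisRestrictSupport L
    (Finset.finsuppAntidiag (Finset.univ : Finset σ) n : Set (σ →₀ ℕ))).map
      (LinearEquiv.ofEq _ _ (homogeneousSubmodule_eq_restrictSupport n))
  have hb (f : homogeneousSubmodule σ L n) (m : Finset.univ.finsuppAntidiag n) :
      b.repr f m = coeff m f.1 := rfl
  have hdiag (m : Finset.univ.finsuppAntidiag n) :
      b.repr (formRep σ L n g (b m)) m = ∏ i, a i ^ m.1 i := by
    rw [hb, coe_formRep_apply, hg, coeff_linSubst_diagonal, ← hb, b.repr_self,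
      Finsupp.single_eq_same, mul_one]
  rw [Representation.character, LinearMap.trace_eq_matrix_trace L b, completeHomogeneous_eq_sum,
    ← Finset.sum_coe_sort]
  simp only [trace, diag_apply, LinearMap.toMatrix_apply]
  exact Finset.sum_congr rfl fun m _ => hdiag m

end FormRepresentation

section ProjectiveZeroLocus

open scoped LinearAlgebra.Projectivization

variable {σ τ L : Type*} [Field L]

/-- The rational points of the projective hypersurface `Ω = 0`. -/
def projZeroLocus (Ω : MvPolynomial σ L) : Set (ℙ L (σ → L)) :=
  {p | eval p.rep Ω = 0}

lemma mk_mem_projZeroLocus {Ω : MvPolynomial σ L} {d : ℕ} (hom : Ω.IsHomogeneous d) {v : σ → L}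
    (hv : v ≠ 0) : Projectivization.mk L v hv ∈ projZeroLocus Ω ↔ eval v Ω = 0 := by
  obtain ⟨c, hc⟩ := Projectivization.exists_smul_eq_mk_rep L v hv
  change eval (Projectivization.mk L v hv).rep Ω = 0 ↔ _
  rw [← hc, Units.smul_def, eval_smul_of_isHomogeneous hom,
    mul_eq_zero_iff_left (pow_ne_zero d c.ne_zero)]

lemma map_mulVecLin_mem_projZeroLocus [Fintype τ] {Ω : MvPolynomial σ L} {d : ℕ}
    (hom : Ω.IsHomogeneous d) {M : Matrix σ τ L} (hM : Function.Injective M.mulVecLin)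
    (p : ℙ L (τ → L)) : p.map M.mulVecLin hM ∈ projZeroLocus Ω ↔
      p ∈ projZeroLocus (linSubst M Ω) := by
  induction p with | h v hv
  rw [Projectivization.map_mk, mk_mem_projZeroLocus hom,
    mk_mem_projZeroLocus (isHomogeneous_linSubst M hom), eval_linSubst, mulVecLin_apply]

section Action

variable [Fintype σ] [DecidableEq σ]

lemma smul_mem_projZeroLocus {Ω : MvPolynomial σ L} {d : ℕ} (hom : Ω.IsHomogeneous d)
    (g : GL σ L) (p : ℙ L (σ → L)) :
    g • p ∈ projZeroLocus Ω ↔ p ∈ projZeroLocus (linSubst g.val Ω) := by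
  induction p with | h v hv
  rw [Projectivization.smul_mk, mk_mem_projZeroLocus hom,
    mk_mem_projZeroLocus (isHomogeneous_linSubst _ hom), eval_linSubst, Units.smul_def,
    smul_eq_mulVec]

lemma mk_mem_fixedBy {g : GL σ L} {v : σ → L} (hv : v ≠ 0) :
    Projectivization.mk L v hv ∈ MulAction.fixedBy (ℙ L (σ → L)) g ↔
      ∃ μ : L, g.val *ᵥ v = μ • v := by
  rw [MulAction.mem_fixedBy, Projectivization.smul_mk, Projectivization.mk_eq_mk_iff']
  simp only [Units.smul_def, smul_eq_mulVec, eq_comm]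

open scoped Pointwise in
lemma smul_projZeroLocus_inter_fixedBy {Ω : MvPolynomial σ L} {d : ℕ} (hom : Ω.IsHomogeneous d)
    (g h : GL σ L) :
    h • (projZeroLocus (linSubst h.val Ω) ∩ MulAction.fixedBy _ (h⁻¹ * g * h)) =
      projZeroLocus Ω ∩ MulAction.fixedBy _ g := by
  have hlocus : h • projZeroLocus (linSubst h.val Ω) = projZeroLocus Ω := by
    ext p
    rw [Set.mem_smul_set_iff_inv_smul_mem, ← smul_mem_projZeroLocus hom, smul_inv_smul]
  rw [Set.smul_set_inter, hlocus, MulAction.smul_fixedBy]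
  group

end Action

end ProjectiveZeroLocus

section BinaryForm

open scoped LinearAlgebra.Projectivization

variable {L : Type*} [Field L] {f : MvPolynomial (Fin 2) L} {d : ℕ}

/-- The restriction `f(T, 1)` of a binary form to the affine line. -/
noncomputable def dehomogenize (f : MvPolynomial (Fin 2) L) : Polynomial L :=
  aeval ![Polynomial.X, 1] f

lemma eval_dehomogenize (t : L) (f : MvPolynomial (Fin 2) L) :
    (dehomogenize f).eval t = eval ![t, 1] f := by
  have h : (Polynomial.aeval t).comp (aeval ![Polynomial.X, 1]) =
      (aeval ![t, 1] : MvPolynomial (Fin 2) L →ₐ[L] L) :=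
    algHom_ext fun i => by fin_cases i <;> simp
  exact DFunLike.congr_fun h f

lemma natDegree_dehomogenize_le_and_coeff (hom : f.IsHomogeneous d) :
    (dehomogenize f).natDegree ≤ d ∧ (dehomogenize f).coeff d = eval ![1, 0] f := by
  have hc : ∀ i, ((![Polynomial.X, 1] : Fin 2 → Polynomial L) i).natDegree ≤ 1 := by
    simp [Fin.forall_fin_two]
  have htop : (fun i => ((![Polynomial.X, 1] : Fin 2 → Polynomial L) i).coeff 1) = ![1, 0] := by
    ext i
    fin_cases i <;> simp [Polynomial.coeff_one]
  simpa only [mul_one, htop, dehomogenize] using natDegree_aeval_le_and_coeff_aeval hom hc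

lemma derivative_dehomogenize (f : MvPolynomial (Fin 2) L) :
    (dehomogenize f).derivative = dehomogenize (pderiv 0 f) := by
  simpa [dehomogenize] using derivation_aeval Polynomial.derivative' ![Polynomial.X, 1] f

lemma euler_dehomogenize (hom : f.IsHomogeneous d) :
    Polynomial.X * dehomogenize (pderiv 0 f) + dehomogenize (pderiv 1 f) =
      (d : Polynomial L) * dehomogenize f := by
  simpa [dehomogenize] using
    congrArg (aeval (![Polynomial.X, 1] : Fin 2 → Polynomial L)) hom.sum_X_mul_pderiv

lemma coeff_dehomogenize_pred {n : ℕ} (hom : f.IsHomogeneous (n + 1)) :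
    (dehomogenize f).coeff n = eval ![1, 0] (pderiv 1 f) := by
  have h := congrArg (Polynomial.coeff · n) (euler_dehomogenize hom)
  have htop := (natDegree_dehomogenize_le_and_coeff (hom.pderiv (i := 1))).2
  rw [Nat.add_sub_cancel] at htop
  simp only [← derivative_dehomogenize, Polynomial.coeff_add, htop, ← Polynomial.C_eq_natCast,
    Polynomial.coeff_C_mul] at h
  cases n with
  | zero => simpa using h.symm
  | succ k =>
    rw [Polynomial.coeff_X_mul, Polynomial.coeff_derivative] at h
    push_cast at h
    linear_combination -h

open Classical in
lemma IsNonsingular.natDegree_dehomogenize_add (hom : f.IsHomogeneous d) (hf : IsNonsingular f) :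
    (dehomogenize f).natDegree + (if eval ![1, 0] f = 0 then 1 else 0) = d := by
  obtain ⟨hdeg, hcoeff⟩ := natDegree_dehomogenize_le_and_coeff hom
  split_ifs with h
  · have hpderiv : eval ![1, 0] (pderiv 1 f) ≠ 0 := fun h1 => by
      have heuler := sum_mul_eval_pderiv hom ![1, 0]
      simp only [Fin.sum_univ_two, cons_val_zero, cons_val_one, zero_mul, add_zero, one_mul, h,
        mul_zero] at heuler
      have h0 := hf ![1, 0] (Fin.forall_fin_two.2 ⟨heuler, h1⟩)
      simp at h0
    cases d with
    | zero =>
      rw [totalDegree_eq_zero_iff_eq_C.1 (Nat.le_zero.1 hom.totalDegree_le)] at hpderiv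
      simp at hpderiv
    | succ n =>
      rw [Polynomial.natDegree_eq_of_le_of_coeff_ne_zero
        (Polynomial.natDegree_le_pred hdeg (hcoeff.trans h))
        (coeff_dehomogenize_pred hom ▸ hpderiv),
        Nat.add_sub_cancel]
  · rw [add_zero, Polynomial.natDegree_eq_of_le_of_coeff_ne_zero hdeg (hcoeff ▸ h)]

variable [IsAlgClosed L]

lemma exists_ne_zero_eval_eq_zero (hom : f.IsHomogeneous d) (hd : d ≠ 0) :
    ∃ v ≠ 0, eval v f = 0 := by
  obtain ⟨hdeg, hcoeff⟩ := natDegree_dehomogenize_le_and_coeff hom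
  by_cases h : eval ![1, 0] f = 0
  · exact ⟨![1, 0], by simp, h⟩
  · have hnat := Polynomial.natDegree_eq_of_le_of_coeff_ne_zero hdeg (hcoeff ▸ h)
    obtain ⟨t, ht⟩ := IsAlgClosed.exists_root (dehomogenize f) fun h0 =>
      hd (hnat.symm.trans (Polynomial.natDegree_eq_of_degree_eq_some h0))
    exact ⟨![t, 1], by simp, by rwa [← eval_dehomogenize]⟩

lemma IsNonsingular.separable_dehomogenize (hom : f.IsHomogeneous d) (hf : IsNonsingular f) :
    (dehomogenize f).Separable := by
  rw [Polynomial.Separable, Polynomial.isCoprime_iff_aeval_ne_zero_of_isAlgClosed L L]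
  intro t
  by_contra! h
  simp only [derivative_dehomogenize, Polynomial.coe_aeval_eq_eval, eval_dehomogenize] at h
  have heuler := sum_mul_eval_pderiv hom ![t, 1]
  simp only [Fin.sum_univ_two, h.1, h.2, cons_val_zero, cons_val_one, mul_zero, zero_add,
    one_mul] at heuler
  have h0 := hf ![t, 1] (Fin.forall_fin_two.2 ⟨h.2, heuler⟩)
  simp at h0

lemma IsNonsingular.finite_projZeroLocus_and_ncard (hom : f.IsHomogeneous d)
    (hf : IsNonsingular f) : (projZeroLocus f).Finite ∧ (projZeroLocus f).ncard = d := by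
  classical
  have hsep := hf.separable_dehomogenize hom
  have hroots : ((dehomogenize f).rootSet L).ncard = (dehomogenize f).natDegree := by
    rw [← Polynomial.card_rootSet_eq_natDegree (K := L) hsep (IsAlgClosed.splits _),
      ← Nat.card_eq_fintype_card, Nat.card_coe_set_eq]
  have hfin := (dehomogenize f).rootSet_finite L
  have hinf : OnePoint.infty ∉ ((↑) : L → OnePoint L) '' (dehomogenize f).rootSet L := by simp
  have hlocus : OnePoint.equivProjectivization L ⁻¹' projZeroLocus f =
      if eval ![1, 0] f = 0 then insert OnePoint.infty ((↑) '' (dehomogenize f).rootSet L)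
      else (↑) '' (dehomogenize f).rootSet L := by
    ext p
    cases p <;> split_ifs with h <;>
      simp [mk_mem_projZeroLocus hom, Polynomial.mem_rootSet, hsep.ne_zero, eval_dehomogenize, h]
  rw [← (OnePoint.equivProjectivization L).image_preimage (projZeroLocus f), hlocus,
    Set.ncard_image_of_injective _ (Equiv.injective _), ← hf.natDegree_dehomogenize_add hom]
  split_ifs
  · rw [Set.ncard_insert_of_notMem hinf (hfin.image _),
      Set.ncard_image_of_injective _ OnePoint.coe_injective, hroots]
    exact ⟨((hfin.image _).insert _).image _, rfl⟩
  · rw [Set.ncard_image_of_injective _ OnePoint.coe_injective, hroots]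
    exact ⟨(hfin.image _).image _, rfl⟩

end BinaryForm

section Diagonalisation

variable {σ L : Type*} [Fintype σ] [DecidableEq σ] [Field L]

lemma exists_basis_mulVec_eq_smul [IsAlgClosed L] [CharZero L] {g : GL σ L}
    (hg : IsOfFinOrder g) :
    ∃ (b : Module.Basis σ L (σ → L)) (a : σ → L), ∀ i, g.val *ᵥ b i = a i • b i := by
  obtain ⟨k, hk, hgk⟩ := isOfFinOrder_iff_pow_eq_one.1 hg
  let f : Module.End L (σ → L) := toLin' g.val
  have hpow : f ^ k = 1 := by
    rw [← toLin'_pow, ← Units.val_pow_eq_pow_val, hgk, Units.val_one, toLin'_one]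
    rfl
  have hss : f.IsSemisimple :=
    Module.End.isSemisimple_of_squarefree_aeval_eq_zero
      (Polynomial.X_pow_sub_one_separable_iff.2 (Nat.cast_ne_zero.2 hk.ne')).squarefree
      (by simp [hpow])
  have hspan := hss.iSup_eigenspace_eq_top
  rw [Submodule.iSup_eq_span] at hspan
  let b := Module.Basis.ofSpan hspan.ge
  let e := b.indexEquiv (Pi.basisFun L σ)
  have hb (i : σ) : ∃ μ : L, g.val *ᵥ b.reindex e i = μ • b.reindex e i := by
    have hmem : b.reindex e i ∈ ⋃ μ, (f.eigenspace μ : Set (σ → L)) :=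
      Module.Basis.ofSpan_subset hspan.ge (by simp [b])
    obtain ⟨μ, hμ⟩ := Set.mem_iUnion.1 hmem
    exact ⟨μ, Module.End.mem_eigenspace_iff.1 hμ⟩
  choose a ha using hb
  exact ⟨b.reindex e, a, ha⟩

lemma exists_conj_eq_diagonal_of_basis {g : GL σ L} (b : Module.Basis σ L (σ → L)) {a : σ → L}
    (hb : ∀ i, g.val *ᵥ b i = a i • b i) : ∃ h : GL σ L, (h⁻¹ * g * h).val = diagonal a := by
  let e := Pi.basisFun L σ
  refine ⟨⟨e.toMatrix b, b.toMatrix e, e.toMatrix_mul_toMatrix_flip b,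
    b.toMatrix_mul_toMatrix_flip e⟩, ?_⟩
  have hconj := basis_toMatrix_mul_linearMap_toMatrix_mul_basis_toMatrix b e b e (toLin' g.val)
  rw [LinearMap.toMatrix_eq_toMatrix', LinearMap.toMatrix'_toLin'] at hconj
  refine hconj.trans (Matrix.ext fun i j => ?_)
  rw [LinearMap.toMatrix_apply, toLin'_apply, hb, map_smul, b.repr_self, Finsupp.smul_single_one,
    Finsupp.single_apply, diagonal_apply]
  grind

end Diagonalisation

section DiagonalSymmetry

open scoped LinearAlgebra.Projectivization

variable {σ L : Type*} [DecidableEq σ] [Field L] {Ω : MvPolynomial σ L} {d : ℕ}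

/-- The coordinate point `[0 : ⋯ : 1 : ⋯ : 0]` of projective space. -/
def coordPoint (L : Type*) [Field L] (i : σ) : ℙ L (σ → L) :=
  Projectivization.mk L (Pi.single i 1) (Pi.single_ne_zero_iff.2 one_ne_zero)

lemma coordPoint_injective : Function.Injective (coordPoint L : σ → ℙ L (σ → L)) := by
  intro i j hij
  obtain ⟨c, hc⟩ := (Projectivization.mk_eq_mk_iff' ..).1 hij
  by_contra hne
  simpa [hne] using congrFun hc i

lemma coordPoint_mem_projZeroLocus (hom : Ω.IsHomogeneous d) {i : σ} :
    coordPoint L i ∈ projZeroLocus Ω ↔ eval (Pi.single i 1) Ω = 0 :=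
  mk_mem_projZeroLocus hom _

lemma mk_eq_coordPoint {v : σ → L} (hv : v ≠ 0) {i : σ} (h : v = v i • Pi.single i 1) :
    Projectivization.mk L v hv = coordPoint L i :=
  (Projectivization.mk_eq_mk_iff' ..).2 ⟨v i, h.symm⟩

variable [Fintype σ] {a v : σ → L} {μ : L}

lemma eq_of_diagonal_mulVec_eq_smul (hv : diagonal a *ᵥ v = μ • v) {i : σ} (hi : v i ≠ 0) :
    a i = μ := by
  have h := congrFun hv i
  rw [mulVec_diagonal, Pi.smul_apply, smul_eq_mul] at h
  exact mul_right_cancel₀ hi h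

lemma PreservesUpToDet.pow_eq_prod (hom : Ω.IsHomogeneous d)
    (h : PreservesUpToDet Ω (diagonal a)) (hv : diagonal a *ᵥ v = μ • v) (hΩ : eval v Ω ≠ 0) :
    μ ^ d = ∏ i, a i := by
  have h' := congrArg (eval v) h
  rw [eval_linSubst, hv, eval_smul_of_isHomogeneous hom, det_diagonal, map_mul, eval_C] at h'
  exact mul_right_cancel₀ hΩ h'

lemma PreservesUpToDet.mul_pow_eq_prod (hom : Ω.IsHomogeneous d)
    (h : PreservesUpToDet Ω (diagonal a)) (hv : diagonal a *ᵥ v = μ • v) {j : σ}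
    (hΩ : eval v (pderiv j Ω) ≠ 0) : a j * μ ^ (d - 1) = ∏ i, a i := by
  have h' := congrArg (eval v) (congrArg (pderiv j) h)
  simp only [pderiv_linSubst, map_sum, map_mul, eval_C, eval_linSubst, hv, pderiv_C_mul,
    eval_smul_of_isHomogeneous hom.pderiv, det_diagonal, diagonal_apply, ite_mul,
    zero_mul, Finset.sum_ite_eq', Finset.mem_univ, if_true, ← mul_assoc] at h'
  exact mul_right_cancel₀ hΩ h'

lemma diagonal_mulVec_single_one (a : σ → L) (i : σ) :
    diagonal a *ᵥ Pi.single i 1 = a i • Pi.single i 1 := by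
  rw [diagonal_mulVec_single, mul_one, ← Pi.single_smul', smul_eq_mul, mul_one]

lemma eq_smul_single_of_diagonal_mulVec_eq_smul (hv : diagonal a *ᵥ v = μ • v) {i : σ}
    (hi : v i ≠ 0) (ha : ∀ j ≠ i, a j ≠ a i) : v = v i • Pi.single i 1 := by
  ext j
  by_cases hj : j = i
  · simp [hj]
  · have hvj : v j = 0 := by
      by_contra h0
      exact ha j hj ((eq_of_diagonal_mulVec_eq_smul hv h0).trans
        (eq_of_diagonal_mulVec_eq_smul hv hi).symm)
    simp [hj, hvj]

lemma coordPoint_mem_fixedBy {t : GL σ L} (ht : t.val = diagonal a) (i : σ) :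
    coordPoint L i ∈ MulAction.fixedBy (ℙ L (σ → L)) t :=
  (mk_mem_fixedBy _).2 ⟨a i, ht ▸ diagonal_mulVec_single_one a i⟩

lemma projZeroLocus_inter_fixedBy_eq_image (hom : Ω.IsHomogeneous d) {t : GL σ L}
    (ht : t.val = diagonal a) (ha : Function.Injective a) :
    projZeroLocus Ω ∩ MulAction.fixedBy _ t = coordPoint L '' {i | eval (Pi.single i 1) Ω = 0} := by
  ext p
  constructor
  · induction p with | h v hv
    rintro ⟨hΩ, hfix⟩
    obtain ⟨μ, hμ⟩ := (mk_mem_fixedBy hv).1 hfix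
    obtain ⟨i, hi⟩ := Function.ne_iff.1 hv
    rw [mk_eq_coordPoint hv (eq_smul_single_of_diagonal_mulVec_eq_smul (ht ▸ hμ) hi
      fun j hj => ha.ne hj)] at hΩ ⊢
    exact ⟨i, (coordPoint_mem_projZeroLocus hom).1 hΩ, rfl⟩
  · rintro ⟨i, hi, rfl⟩
    exact ⟨(coordPoint_mem_projZeroLocus hom).2 hi, coordPoint_mem_fixedBy ht i⟩

end DiagonalSymmetry

section PlaneCurve

variable {L : Type*} [Field L] {Ω : MvPolynomial (Fin 3) L} {n : ℕ}

lemma pow_add_mul_inv_pow_of_pow_eq_mul {x y z : L} (hx : x ≠ 0)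
    (h : x ^ (n + 2) = y * z) :
    x ^ (n + 2) + x ^ 2 * y * z * x⁻¹ ^ (n + 2) = x ^ 2 + y * z := by
  have hinv : (x * x⁻¹) ^ (n + 2) = 1 := by rw [mul_inv_cancel₀ hx, one_pow]
  linear_combination h - x ^ 2 * x⁻¹ ^ (n + 2) * h + x ^ 2 * hinv

lemma pow_add_mul_inv_pow_of_pow_eq {x y z : L} (hx : x ≠ 0)
    (h : x ^ (n + 1) = z) :
    x ^ (n + 2) + x ^ 2 * y * z * x⁻¹ ^ (n + 2) = x ^ 2 + y * z - (x - y) * (x - z) := by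
  have hinv : (x * x⁻¹) ^ (n + 2) = 1 := by rw [mul_inv_cancel₀ hx, one_pow]
  linear_combination x * h - x ^ 2 * y * x⁻¹ ^ (n + 2) * h + x * y * hinv

open Classical in
lemma pow_add_mul_inv_pow_of_preservesUpToDet (hom : Ω.IsHomogeneous (n + 3))
    (hΩ : IsNonsingular Ω) {a : Fin 3 → L} (ha : ∀ i, a i ≠ 0)
    (h : PreservesUpToDet Ω (diagonal a)) {i j k : Fin 3} (hij : i ≠ j) (hik : i ≠ k)
    (hjk : j ≠ k) :
    a i ^ (n + 2) + a i ^ 2 * a j * a k * (a i)⁻¹ ^ (n + 2) = a i ^ 2 + a j * a k -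
      (if eval (Pi.single i 1) Ω = 0 then 1 else 0) * ((a i - a j) * (a i - a k)) := by
  have huniv : (Finset.univ : Finset (Fin 3)) = {i, j, k} := by decide +revert
  have hcase (l : Fin 3) : l = i ∨ l = j ∨ l = k := by decide +revert
  have hprod : ∏ l, a l = a i * a j * a k := by
    rw [huniv, Finset.prod_insert (by simp [hij, hik]), Finset.prod_pair hjk, mul_assoc]
  have hv := diagonal_mulVec_single_one a i
  split_ifs with hzero
  · obtain ⟨l, hl⟩ : ∃ l, eval (Pi.single i 1) (pderiv l Ω) ≠ 0 := by
      by_contra! h0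
      exact one_ne_zero (Pi.single_eq_zero_iff.1 (hΩ _ h0))
    have hli : l ≠ i := by
      rintro rfl
      exact hl (by simpa [Pi.single_apply, hzero] using sum_mul_eval_pderiv hom (Pi.single l 1))
    have hw := h.mul_pow_eq_prod hom hv hl
    rw [hprod, Nat.add_succ_sub_one] at hw
    rw [one_mul]
    rcases (hcase l).resolve_left hli with rfl | rfl
    · exact pow_add_mul_inv_pow_of_pow_eq (ha i)
        (mul_left_cancel₀ (mul_ne_zero (ha i) (ha l)) (by linear_combination hw))
    · rw [mul_right_comm (a i ^ 2), mul_comm (a j), mul_comm (a i - a j)]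
      exact pow_add_mul_inv_pow_of_pow_eq (ha i)
        (mul_left_cancel₀ (mul_ne_zero (ha i) (ha l)) (by linear_combination hw))
  · have hw := h.pow_eq_prod hom hv hzero
    rw [hprod] at hw
    rw [zero_mul, sub_zero]
    exact pow_add_mul_inv_pow_of_pow_eq_mul (ha i)
      (mul_left_cancel₀ (ha i) (by linear_combination hw))

lemma mul_completeHomogeneous_triple_add_inv {x y z : L} (hx : x ≠ 0) (hy : y ≠ 0) (hz : z ≠ 0) :
    (x - y) * (x - z) * (y - z) *
        (completeHomogeneous ![x, y, z] n + completeHomogeneous ![x, y, z]⁻¹ n) =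
      (y - z) * (x ^ (n + 2) + x ^ 2 * y * z * x⁻¹ ^ (n + 2)) -
      (x - z) * (y ^ (n + 2) + y ^ 2 * x * z * y⁻¹ ^ (n + 2)) +
      (x - y) * (z ^ (n + 2) + z ^ 2 * x * y * z⁻¹ ^ (n + 2)) := by
  have h := mul_completeHomogeneous_triple x⁻¹ y⁻¹ z⁻¹ n
  have hinv : ![x, y, z]⁻¹ = ![x⁻¹, y⁻¹, z⁻¹] := by
    ext i
    fin_cases i <;> rfl
  rw [hinv, mul_add, mul_completeHomogeneous_triple]
  have hV : (x - y) * (x - z) * (y - z) =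
      -(x * y * z) ^ 2 * ((x⁻¹ - y⁻¹) * (x⁻¹ - z⁻¹) * (y⁻¹ - z⁻¹)) := by
    field_simp
    ring
  rw [hV, mul_assoc, h]
  field_simp
  ring

open Classical in
lemma completeHomogeneous_add_inv_of_injective (hom : Ω.IsHomogeneous (n + 3))
    (hΩ : IsNonsingular Ω) {a : Fin 3 → L} (ha : ∀ i, a i ≠ 0)
    (h : PreservesUpToDet Ω (diagonal a)) (hinj : Function.Injective a) :
    completeHomogeneous a n + completeHomogeneous a⁻¹ n =
      2 - ({i | eval (Pi.single i 1) Ω = 0} : Set (Fin 3)).ncard := by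
  have h01 : a 0 - a 1 ≠ 0 := sub_ne_zero.2 (hinj.ne (by decide))
  have h02 : a 0 - a 2 ≠ 0 := sub_ne_zero.2 (hinj.ne (by decide))
  have h12 : a 1 - a 2 ≠ 0 := sub_ne_zero.2 (hinj.ne (by decide))
  have hvec : a = ![a 0, a 1, a 2] := by
    ext i
    fin_cases i <;> rfl
  have hcard : (({i | eval (Pi.single i 1) Ω = 0} : Set (Fin 3)).ncard : L) =
      ∑ i : Fin 3, if eval (Pi.single i 1) Ω = 0 then 1 else 0 := by
    rw [Set.ncard_eq_toFinset_card', Finset.sum_boole, Set.toFinset_ofPred]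
  have hsum := mul_completeHomogeneous_triple_add_inv (n := n) (ha 0) (ha 1) (ha 2)
  rw [pow_add_mul_inv_pow_of_preservesUpToDet hom hΩ ha h (by decide) (by decide) (by decide),
    pow_add_mul_inv_pow_of_preservesUpToDet hom hΩ ha h (by decide) (by decide) (by decide),
    pow_add_mul_inv_pow_of_preservesUpToDet hom hΩ ha h (by decide) (by decide) (by decide),
    ← hvec] at hsum
  rw [hcard, Fin.sum_univ_three]
  refine mul_left_cancel₀ (mul_ne_zero (mul_ne_zero h01 h02) h12) (hsum.trans ?_)
  ring

end PlaneCurve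

section HyperplaneSection

variable {R : Type*} [CommRing R] {m : ℕ}

variable (R m) in
/-- The inclusion of the coordinate hyperplane `X 0 = 0`. -/
def hyperplaneInclusion : Matrix (Fin (m + 1)) (Fin m) R :=
  (1 : Matrix (Fin (m + 1)) (Fin (m + 1)) R).submatrix id Fin.succ

lemma hyperplaneInclusion_mulVec (w : Fin m → R) :
    hyperplaneInclusion R m *ᵥ w = vecCons 0 w := by
  ext i
  induction i using Fin.cases <;>
    simp [hyperplaneInclusion, mulVec, dotProduct, one_apply, eq_comm]

lemma hyperplaneInclusion_mulVecLin_injective :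
    Function.Injective (hyperplaneInclusion R m).mulVecLin := by
  intro v w h
  rw [mulVecLin_apply, mulVecLin_apply, hyperplaneInclusion_mulVec,
    hyperplaneInclusion_mulVec] at h
  exact (vecCons_inj.1 h).2

lemma pderiv_linSubst_hyperplaneInclusion (f : MvPolynomial (Fin (m + 1)) R) (j : Fin m) :
    pderiv j (linSubst (hyperplaneInclusion R m) f) =
      linSubst (hyperplaneInclusion R m) (pderiv j.succ f) := by
  simp [pderiv_linSubst, hyperplaneInclusion, one_apply]

lemma eval_linSubst_hyperplaneInclusion (f : MvPolynomial (Fin (m + 1)) R) (w : Fin m → R) :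
    eval w (linSubst (hyperplaneInclusion R m) f) = eval (vecCons 0 w) f := by
  rw [eval_linSubst, hyperplaneInclusion_mulVec]

end HyperplaneSection

section Homology

open scoped LinearAlgebra.Projectivization

variable {L : Type*} [Field L] {Ω : MvPolynomial (Fin 3) L} {n : ℕ} {x z : L}

lemma diagonal_mulVec_vecCons_zero (x z : L) (w : Fin 2 → L) :
    diagonal ![x, z, z] *ᵥ vecCons 0 w = z • vecCons 0 w := by
  ext i
  fin_cases i <;> simp [mulVec_diagonal]

lemma linSubst_hyperplaneInclusion_ne_zero [IsAlgClosed L]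
    (hom : Ω.IsHomogeneous (n + 3)) (hΩ : IsNonsingular Ω) :
    linSubst (hyperplaneInclusion L 2) Ω ≠ 0 := by
  intro hf
  obtain ⟨w, hw, hw0⟩ := exists_ne_zero_eval_eq_zero
    (isHomogeneous_linSubst (hyperplaneInclusion L 2) (hom.pderiv (i := 0))) (by simp)
  refine hw (vecCons_inj.1 ((hΩ (vecCons 0 w) fun i => ?_).trans (cons_zero_zero).symm)).2
  rw [← eval_linSubst_hyperplaneInclusion]
  cases i using Fin.cases with
  | zero => exact hw0
  | succ j => rw [← pderiv_linSubst_hyperplaneInclusion, hf, map_zero, map_zero]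

lemma PreservesUpToDet.pow_eq_of_homology [IsAlgClosed L] (hom : Ω.IsHomogeneous (n + 3))
    (hΩ : IsNonsingular Ω) (hz : z ≠ 0) (h : PreservesUpToDet Ω (diagonal ![x, z, z])) :
    z ^ (n + 1) = x := by
  obtain ⟨w, hw⟩ : ∃ w, eval w (linSubst (hyperplaneInclusion L 2) Ω) ≠ 0 := by
    by_contra! h0
    exact linSubst_hyperplaneInclusion_ne_zero hom hΩ
      (MvPolynomial.funext fun w => by rw [h0, map_zero])
  rw [eval_linSubst_hyperplaneInclusion] at hw
  have hprod := h.pow_eq_prod hom (diagonal_mulVec_vecCons_zero x z w) hw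
  rw [Fin.prod_univ_three] at hprod
  simp only [cons_val_zero, cons_val_one, cons_val] at hprod
  exact mul_left_cancel₀ (pow_ne_zero 2 hz) (by linear_combination hprod)

lemma isNonsingular_linSubst_hyperplaneInclusion (hom : Ω.IsHomogeneous (n + 3))
    (hΩ : IsNonsingular Ω) (hx : x ≠ 0) (hz : z ≠ 0) (hxz : x ≠ z)
    (hpow : z ^ (n + 1) = x) (h : PreservesUpToDet Ω (diagonal ![x, z, z])) :
    IsNonsingular (linSubst (hyperplaneInclusion L 2) Ω) := by
  intro w hw
  refine (vecCons_inj.1 ((hΩ (vecCons 0 w) fun i => ?_).trans (cons_zero_zero).symm)).2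
  cases i using Fin.cases with
  | zero =>
    by_contra h0
    have hprod := h.mul_pow_eq_prod hom (diagonal_mulVec_vecCons_zero x z w) h0
    simp only [Fin.prod_univ_three, cons_val_zero, cons_val_one, cons_val] at hprod
    refine hxz (mul_left_cancel₀ (mul_ne_zero hx hz) ?_)
    rw [Nat.add_succ_sub_one, pow_succ, hpow] at hprod
    linear_combination hprod
  | succ j =>
    rw [← eval_linSubst_hyperplaneInclusion, ← pderiv_linSubst_hyperplaneInclusion, hw]

lemma projZeroLocus_inter_fixedBy_homology (hom : Ω.IsHomogeneous (n + 3)) {t : GL (Fin 3) L}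
    (ht : t.val = diagonal ![x, z, z]) (hxz : x ≠ z) :
    projZeroLocus Ω ∩ MulAction.fixedBy _ t =
      ({coordPoint L 0} ∩ projZeroLocus Ω) ∪
        Projectivization.map (hyperplaneInclusion L 2).mulVecLin
          hyperplaneInclusion_mulVecLin_injective ''
            projZeroLocus (linSubst (hyperplaneInclusion L 2) Ω) := by
  ext p
  constructor
  · rintro ⟨hΩ, hfix⟩
    induction p with | h v hv
    obtain ⟨μ, hμ⟩ := (mk_mem_fixedBy hv).1 hfix
    rw [ht] at hμ
    by_cases hv0 : v 0 = 0
    · have hcons : v = hyperplaneInclusion L 2 *ᵥ vecTail v := by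
        rw [hyperplaneInclusion_mulVec, ← hv0]
        exact (cons_head_tail v).symm
      have hw : vecTail v ≠ 0 := fun h0 => hv (by rw [hcons, h0, mulVec_zero])
      have hp : Projectivization.mk L v hv = Projectivization.map
          (hyperplaneInclusion L 2).mulVecLin hyperplaneInclusion_mulVecLin_injective
            (Projectivization.mk L (vecTail v) hw) := by
        simp only [Projectivization.map_mk, mulVecLin_apply, ← hcons]
      exact Or.inr ⟨_, (map_mulVecLin_mem_projZeroLocus hom _ _).1 (hp ▸ hΩ), hp.symm⟩
    · refine Or.inl ⟨mk_eq_coordPoint hv (eq_smul_single_of_diagonal_mulVec_eq_smul hμ hv0 ?_), hΩ⟩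
      intro j hj
      fin_cases j <;> simp_all [Ne.symm hxz]
  · rintro (⟨rfl, hΩ⟩ | ⟨q, hq, rfl⟩)
    · exact ⟨hΩ, coordPoint_mem_fixedBy ht 0⟩
    · refine ⟨(map_mulVecLin_mem_projZeroLocus hom _ _).2 hq, ?_⟩
      induction q with | h w hw
      rw [Projectivization.map_mk, mk_mem_fixedBy, mulVecLin_apply, hyperplaneInclusion_mulVec, ht]
      exact ⟨z, diagonal_mulVec_vecCons_zero x z w⟩

lemma coordPoint_zero_notMem_map_hyperplaneInclusion {S : Set (ℙ L (Fin 2 → L))} :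
    coordPoint L 0 ∉ Projectivization.map (hyperplaneInclusion L 2).mulVecLin
          hyperplaneInclusion_mulVecLin_injective '' S := by
  rintro ⟨q, -, hq⟩
  induction q with | h w hw
  obtain ⟨c, hc⟩ := (Projectivization.mk_eq_mk_iff' ..).1 hq.symm
  rw [mulVecLin_apply, hyperplaneInclusion_mulVec] at hc
  simpa using congrFun hc 0

lemma sq_mul_completeHomogeneous_triple_add_inv (hx : x ≠ 0) (hz : z ≠ 0)
    (hpow : z ^ (n + 1) = x) :
    (x - z) ^ 2 * (completeHomogeneous ![x, z, z] n + completeHomogeneous ![x, z, z]⁻¹ n) =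
      x ^ (n + 2) + x ^ 2 * z * z * x⁻¹ ^ (n + 2) - (x ^ 2 + z * z) - (n + 1) * (x - z) ^ 2 := by
  have hinv : ![x, z, z]⁻¹ = ![x⁻¹, z⁻¹, z⁻¹] := by
    ext i
    fin_cases i <;> rfl
  have hsq : (x - z) ^ 2 = (x * z) ^ 2 * (x⁻¹ - z⁻¹) ^ 2 := by
    field_simp
    ring
  have hz2 : z ^ (n + 2) = x * z := by rw [pow_succ, hpow]
  rw [hinv, mul_add, sq_mul_completeHomogeneous_triple, hpow, hz2, hsq, mul_assoc ((x * z) ^ 2),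
    sq_mul_completeHomogeneous_triple, inv_pow z, inv_pow z, hpow, hz2]
  field_simp
  ring

lemma ncard_projZeroLocus_inter_fixedBy_homology [IsAlgClosed L] [CharZero L]
    (hom : Ω.IsHomogeneous (n + 3)) (hΩ : IsNonsingular Ω) (hx : x ≠ 0) (hz : z ≠ 0)
    (hxz : x ≠ z) {t : GL (Fin 3) L} (ht : t.val = diagonal ![x, z, z])
    (h : PreservesUpToDet Ω (diagonal ![x, z, z])) :
    (projZeroLocus Ω ∩ MulAction.fixedBy _ t).Finite ∧
      (projZeroLocus Ω ∩ MulAction.fixedBy _ t).ncard =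
        ({coordPoint L 0} ∩ projZeroLocus Ω).ncard + (n + 3) := by
  obtain ⟨hfin, hcard⟩ := IsNonsingular.finite_projZeroLocus_and_ncard
    (isHomogeneous_linSubst _ hom)
    (isNonsingular_linSubst_hyperplaneInclusion hom hΩ hx hz hxz (h.pow_eq_of_homology hom hΩ hz) h)
  have hfin₀ := (Set.finite_singleton (coordPoint L (0 : Fin 3))).inter_of_left (projZeroLocus Ω)
  rw [projZeroLocus_inter_fixedBy_homology hom ht hxz, Set.ncard_union_eq _ hfin₀ (hfin.image _),
    Set.ncard_image_of_injective _ (Projectivization.map_injective _ _), hcard]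
  · exact ⟨hfin₀.union (hfin.image _), rfl⟩
  · exact (Set.disjoint_singleton_left.2 coordPoint_zero_notMem_map_hyperplaneInclusion).mono_left
      Set.inter_subset_left

lemma completeHomogeneous_add_inv_of_homology [IsAlgClosed L]
    (hom : Ω.IsHomogeneous (n + 3)) (hΩ : IsNonsingular Ω) (hx : x ≠ 0) (hz : z ≠ 0)
    (hxz : x ≠ z) (h : PreservesUpToDet Ω (diagonal ![x, z, z])) :
    completeHomogeneous ![x, z, z] n + completeHomogeneous ![x, z, z]⁻¹ n =
      2 - (({coordPoint L 0} ∩ projZeroLocus Ω).ncard + (n + 3)) := by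
  classical
  have hcard : (({coordPoint L 0} ∩ projZeroLocus Ω).ncard : L) =
      if eval (Pi.single 0 1) Ω = 0 then 1 else 0 := by
    split_ifs with h0
    · rw [Set.singleton_inter_of_mem ((coordPoint_mem_projZeroLocus hom).2 h0), Set.ncard_singleton,
        Nat.cast_one]
    · rw [Set.singleton_inter_of_notMem (mt (coordPoint_mem_projZeroLocus hom).1 h0),
        Set.ncard_empty, Nat.cast_zero]
  have ha : ∀ i, ![x, z, z] i ≠ 0 := by simp [Fin.forall_fin_succ, hx, hz]
  have htrace := pow_add_mul_inv_pow_of_preservesUpToDet hom hΩ ha h (i := 0) (j := 1) (k := 2)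
    (by decide) (by decide) (by decide)
  simp only [cons_val_zero, cons_val_one, cons_val] at htrace
  refine mul_left_cancel₀ (pow_ne_zero 2 (sub_ne_zero.2 hxz)) ?_
  rw [sq_mul_completeHomogeneous_triple_add_inv hx hz (h.pow_eq_of_homology hom hΩ hz), hcard]
  linear_combination htrace

end Homology

section LefschetzFormula

variable {L : Type*} [Field L] {Ω : MvPolynomial (Fin 3) L} {n : ℕ}

/-- The Lefschetz trace formula for `g` on the plane curve `Ω = 0` of degree `n + 3`, the forms of
degree `n` playing the role of the holomorphic differentials. -/
def LefschetzFormula (Ω : MvPolynomial (Fin 3) L) (n : ℕ) (g : GL (Fin 3) L) : Prop :=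
  (projZeroLocus Ω ∩ MulAction.fixedBy _ g).Finite ∧
    (formRep (Fin 3) L n).character g + (formRep (Fin 3) L n).character g⁻¹ =
      2 - (projZeroLocus Ω ∩ MulAction.fixedBy _ g).ncard

open scoped Pointwise in
lemma LefschetzFormula.of_conj {d : ℕ} (hom : Ω.IsHomogeneous d) {g h : GL (Fin 3) L}
    (hg : LefschetzFormula (linSubst h.val Ω) n (h⁻¹ * g * h)) : LefschetzFormula Ω n g := by
  have hchar (k : GL (Fin 3) L) : (formRep (Fin 3) L n).character (h⁻¹ * k * h) =
      (formRep (Fin 3) L n).character k := by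
    simpa using Representation.char_conj (formRep (Fin 3) L n) k h⁻¹
  have hinv : (h⁻¹ * g * h)⁻¹ = h⁻¹ * g⁻¹ * h := by group
  rw [LefschetzFormula, hinv, hchar, hchar] at hg
  rw [LefschetzFormula, ← smul_projZeroLocus_inter_fixedBy hom g h, Set.ncard_smul_set]
  exact ⟨hg.1.smul_set, hg.2⟩

lemma diagonal_apply_ne_zero_of_eq {σ : Type*} [Fintype σ] [DecidableEq σ]
    {t : GL σ L} {a : σ → L} (ht : t.val = diagonal a) (i : σ) : a i ≠ 0 := by
  have hdet := (isUnit_iff_isUnit_det _).1 t.isUnit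
  rw [ht, det_diagonal] at hdet
  exact Finset.prod_ne_zero_iff.1 hdet.ne_zero i (Finset.mem_univ i)

lemma character_add_character_inv_of_eq_diagonal {σ : Type*} [Fintype σ] [DecidableEq σ]
    {t : GL σ L} {a : σ → L} (ht : t.val = diagonal a) :
    (formRep σ L n).character t + (formRep σ L n).character t⁻¹ =
      completeHomogeneous a n + completeHomogeneous a⁻¹ n := by
  have hinv : (t⁻¹ : GL σ L).val = diagonal a⁻¹ := by
    rw [coe_units_inv, ht]
    exact inv_eq_right_inv (by simp [diagonal_apply_ne_zero_of_eq ht])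
  rw [character_formRep_of_inv_eq_diagonal hinv,
    character_formRep_of_inv_eq_diagonal (a := a) (by rwa [inv_inv]), add_comm]

lemma lefschetzFormula_of_injective (hom : Ω.IsHomogeneous (n + 3)) (hΩ : IsNonsingular Ω)
    {t : GL (Fin 3) L} {a : Fin 3 → L} (ht : t.val = diagonal a) (ha : Function.Injective a)
    (h : PreservesUpToDet Ω t.val) : LefschetzFormula Ω n t := by
  rw [LefschetzFormula, character_add_character_inv_of_eq_diagonal ht,
    projZeroLocus_inter_fixedBy_eq_image hom ht ha,
    Set.ncard_image_of_injective _ coordPoint_injective]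
  exact ⟨Set.toFinite _, completeHomogeneous_add_inv_of_injective hom hΩ
    (diagonal_apply_ne_zero_of_eq ht) (ht ▸ h) ha⟩

lemma lefschetzFormula_of_homology [IsAlgClosed L] [CharZero L] (hom : Ω.IsHomogeneous (n + 3))
    (hΩ : IsNonsingular Ω) {t : GL (Fin 3) L} {x z : L} (ht : t.val = diagonal ![x, z, z])
    (hxz : x ≠ z) (h : PreservesUpToDet Ω t.val) : LefschetzFormula Ω n t := by
  have hx : x ≠ 0 := diagonal_apply_ne_zero_of_eq ht 0
  have hz : z ≠ 0 := diagonal_apply_ne_zero_of_eq ht 1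
  rw [ht] at h
  obtain ⟨hfin, hcard⟩ := ncard_projZeroLocus_inter_fixedBy_homology hom hΩ hx hz hxz ht h
  refine ⟨hfin, ?_⟩
  rw [character_add_character_inv_of_eq_diagonal ht, hcard,
    completeHomogeneous_add_inv_of_homology hom hΩ hx hz hxz h]
  push_cast
  rfl

lemma exists_perm_comp_eq_of_not_injective {α : Type*} {a : Fin 3 → α}
    (hinj : ¬Function.Injective a) (hconst : ¬∀ i, a i = a 0) :
    ∃ (s : Equiv.Perm (Fin 3)) (x z : α), x ≠ z ∧ a ∘ s = ![x, z, z] := by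
  have hcomp (s : Equiv.Perm (Fin 3)) (hs : a (s 0) ≠ a (s 1)) (hs' : a (s 2) = a (s 1)) :
      ∃ (s : Equiv.Perm (Fin 3)) (x z : α), x ≠ z ∧ a ∘ s = ![x, z, z] :=
    ⟨s, _, _, hs, by ext i; fin_cases i <;> simp [hs']⟩
  have hcases : a 0 = a 1 ∨ a 0 = a 2 ∨ a 1 = a 2 := by
    by_contra! h
    refine hinj fun i j hij => ?_
    fin_cases i <;> fin_cases j <;> simp_all
  rw [Fin.forall_fin_succ, Fin.forall_fin_two] at hconst
  rcases hcases with h | h | h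
  · exact hcomp (Equiv.swap 0 2) (by grind) (by grind)
  · exact hcomp (Equiv.swap 0 1) (by grind) (by grind)
  · exact hcomp (Equiv.refl _) (by grind) (by grind)

lemma PreservesUpToDet.conj {σ R : Type*} [Fintype σ] [DecidableEq σ] [CommRing R]
    {Ω : MvPolynomial σ R} {g : GL σ R} (hg : PreservesUpToDet Ω g.val) (h : GL σ R) :
    PreservesUpToDet (linSubst h.val Ω) (h⁻¹ * g * h).val := by
  have hmul : h.val * (h⁻¹ * g * h).val = g.val * h.val := by
    rw [← Units.val_mul, ← Units.val_mul]
    group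
  have hdet : (h⁻¹ * g * h).val.det = g.val.det := by
    simpa using det_units_conj' h g.val
  rw [PreservesUpToDet, ← linSubst_mul, hmul, linSubst_mul, hg, map_mul, linSubst_C, hdet]

lemma mem_center_of_conj_eq_diagonal {σ : Type*} [Fintype σ] [DecidableEq σ] {g h : GL σ L}
    {a : σ → L} {c : L} (ht : (h⁻¹ * g * h).val = diagonal a) (ha : ∀ i, a i = c) :
    g ∈ Subgroup.center (GL σ L) := by
  have hmem : h⁻¹ * g * h ∈ Subgroup.center (GL σ L) :=
    GeneralLinearGroup.mem_center_iff_val_mem_range_scalar.2 ⟨c, by rw [ht, funext ha]; rfl⟩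
  simpa [mul_assoc] using (inferInstance : (Subgroup.center (GL σ L)).Normal).conj_mem _ hmem h

theorem lefschetzFormula [IsAlgClosed L] [CharZero L] (hom : Ω.IsHomogeneous (n + 3))
    (hΩ : IsNonsingular Ω) {g : GL (Fin 3) L} (h : PreservesUpToDet Ω g.val)
    (hfin : IsOfFinOrder g) (hg : g ∉ Subgroup.center (GL (Fin 3) L)) :
    LefschetzFormula Ω n g := by
  obtain ⟨b, a, hb⟩ := exists_basis_mulVec_eq_smul hfin
  obtain ⟨k, hk⟩ := exists_conj_eq_diagonal_of_basis b hb
  by_cases hinj : Function.Injective a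
  · exact .of_conj hom (lefschetzFormula_of_injective (isHomogeneous_linSubst _ hom)
      (hΩ.linSubst k.det_ne_zero) hk hinj (h.conj k))
  · obtain ⟨s, x, z, hxz, hs⟩ := exists_perm_comp_eq_of_not_injective hinj
      fun ha => hg (mem_center_of_conj_eq_diagonal hk ha)
    obtain ⟨k, hk⟩ := exists_conj_eq_diagonal_of_basis (b.reindex s.symm) (a := a ∘ s)
      fun i => by simpa using hb (s i)
    exact .of_conj hom (lefschetzFormula_of_homology (isHomogeneous_linSubst _ hom)
      (hΩ.linSubst k.det_ne_zero) (hs ▸ hk) hxz (h.conj k))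

end LefschetzFormula

section Hurwitz

lemma inv_add_inv_add_inv_le_of_le_of_le {a b c : ℕ} (ha : 2 ≤ a) (hab : a ≤ b) (hbc : b ≤ c)
    (h : (a : ℚ)⁻¹ + (b : ℚ)⁻¹ + (c : ℚ)⁻¹ < 1) : (a : ℚ)⁻¹ + (b : ℚ)⁻¹ + (c : ℚ)⁻¹ ≤ 41 / 42 := by
  have inv_le {k m : ℕ} (hk : 0 < k) (hkm : k ≤ m) : (m : ℚ)⁻¹ ≤ (k : ℚ)⁻¹ := by gcongr
  have inv_pos {k m : ℕ} (hk : 0 < k) (hkm : k ≤ m) : 0 < (m : ℚ)⁻¹ := by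
    have := hk.trans_le hkm
    positivity
  have bound {p q r : ℕ} (hp : 0 < p) (hq : 0 < q) (hr : 0 < r) (hpa : p ≤ a) (hqb : q ≤ b)
      (hrc : r ≤ c) (hsum : (p : ℚ)⁻¹ + (q : ℚ)⁻¹ + (r : ℚ)⁻¹ ≤ 41 / 42) :
      (a : ℚ)⁻¹ + (b : ℚ)⁻¹ + (c : ℚ)⁻¹ ≤ 41 / 42 := by
    linarith [inv_le hp hpa, inv_le hq hqb, inv_le hr hrc]
  obtain rfl | rfl | ha4 : a = 2 ∨ a = 3 ∨ 4 ≤ a := by omega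
  · obtain rfl | rfl | rfl | hb5 : b = 2 ∨ b = 3 ∨ b = 4 ∨ 5 ≤ b := by omega
    · norm_num at h
      linarith [inv_pos two_pos hbc]
    · have hc7 : 7 ≤ c := by
        by_contra! hc
        interval_cases c <;> norm_num at h
      exact bound (p := 2) (q := 3) (by simp) (by simp) (by simp) le_rfl le_rfl hc7 (by norm_num)
    · have hc5 : 5 ≤ c := by
        by_contra! hc
        interval_cases c
        norm_num at h
      exact bound (p := 2) (q := 4) (by simp) (by simp) (by simp) le_rfl le_rfl hc5 (by norm_num)
    · exact bound (p := 2) (by simp) (by simp) (by simp) le_rfl hb5 (hb5.trans hbc) (by norm_num)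
  · have hc4 : 4 ≤ c := by
      by_contra! hc
      obtain ⟨rfl, rfl⟩ : b = 3 ∧ c = 3 := by omega
      norm_num at h
    exact bound (by simp) (by simp) (by simp) le_rfl hab hc4 (by norm_num)
  · exact bound (by simp) (by simp) (by simp) ha4 (ha4.trans hab) (ha4.trans (hab.trans hbc))
      (by norm_num)

lemma sum_inv_le_of_two_le {e : Fin 3 → ℕ} (he : ∀ i, 2 ≤ e i)
    (h : ∑ i, (e i : ℚ)⁻¹ < 1) : ∑ i, (e i : ℚ)⁻¹ ≤ 41 / 42 := by
  rw [← Equiv.sum_comp (Tuple.sort e), Fin.sum_univ_three] at h ⊢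
  exact inv_add_inv_add_inv_le_of_le_of_le (he _) (Tuple.monotone_sort e (by decide))
    (Tuple.monotone_sort e (by decide)) h

/-- The hyperbolic area, divided by `2π`, of an orbifold of genus `g` with cone points of
orders `e i`. -/
def orbifoldArea {ι : Type*} [Fintype ι] (g : ℕ) (e : ι → ℕ) : ℚ :=
  2 * g - 2 + ∑ i, (1 - (e i : ℚ)⁻¹)

variable {ι : Type*} [Fintype ι] {g : ℕ} {e : ι → ℕ}

lemma orbifoldArea_eq_add_sum_half_sub : orbifoldArea g e =
    ((4 * g + Fintype.card ι : ℕ) - 4) / 2 + ∑ i, (2⁻¹ - (e i : ℚ)⁻¹) := by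
  simp only [orbifoldArea, Finset.sum_sub_distrib, Finset.sum_const, Finset.card_univ,
    nsmul_eq_mul, Nat.cast_add, Nat.cast_mul]
  ring

lemma one_div_42_le_orbifoldArea_of_card_eq_three (he : ∀ i, 2 ≤ e i)
    (hι : Fintype.card ι = 3) (h : 0 < orbifoldArea 0 e) : 1 / 42 ≤ orbifoldArea 0 e := by
  have harea : orbifoldArea 0 e = 1 - ∑ i, (e ((Fintype.equivFinOfCardEq hι).symm i) : ℚ)⁻¹ := by
    rw [Equiv.sum_comp _ fun i => (e i : ℚ)⁻¹]
    simp only [orbifoldArea, Finset.sum_sub_distrib, Finset.sum_const, Finset.card_univ, hι]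
    norm_num
    ring
  have := sum_inv_le_of_two_le (fun i => he ((Fintype.equivFinOfCardEq hι).symm i)) (by linarith)
  linarith

lemma one_div_42_le_orbifoldArea (he : ∀ i, 2 ≤ e i) (h : 0 < orbifoldArea g e) :
    1 / 42 ≤ orbifoldArea g e := by
  have hterm (i : ι) : 0 ≤ (2⁻¹ - (e i : ℚ)⁻¹) := sub_nonneg.2 (by gcongr; exact_mod_cast he i)
  have hsum : 0 ≤ ∑ i, (2⁻¹ - (e i : ℚ)⁻¹) := Finset.sum_nonneg fun i _ => hterm i
  have harea := orbifoldArea_eq_add_sum_half_sub (g := g) (e := e)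
  obtain hlt | heq | heq | hgt : 4 * g + Fintype.card ι < 3 ∨ 4 * g + Fintype.card ι = 3 ∨
      4 * g + Fintype.card ι = 4 ∨ 5 ≤ 4 * g + Fintype.card ι := by omega
  · obtain rfl : g = 0 := by omega
    have hle : ∑ i, (1 - (e i : ℚ)⁻¹) ≤ Fintype.card ι := by
      simpa using Finset.sum_le_card_nsmul Finset.univ (fun i => 1 - (e i : ℚ)⁻¹) 1 (by simp)
    have hcard : (Fintype.card ι : ℚ) ≤ 2 := by exact_mod_cast (by omega : Fintype.card ι ≤ 2)
    rw [orbifoldArea, Nat.cast_zero] at h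
    linarith
  · obtain rfl : g = 0 := by omega
    exact one_div_42_le_orbifoldArea_of_card_eq_three he (by omega) h
  · rw [heq, Nat.cast_ofNat, sub_self, zero_div, zero_add] at harea
    obtain ⟨i, -, hi⟩ := Finset.exists_lt_of_sum_lt (s := Finset.univ) (f := fun _ : ι => (0 : ℚ))
      (g := fun i => 2⁻¹ - (e i : ℚ)⁻¹) (by simpa [harea] using h)
    have hi3 : 3 ≤ e i := by
      by_contra! hlt
      obtain h2 : e i = 2 := by linarith [he i]
      norm_num [h2] at hi
    have hinv : (e i : ℚ)⁻¹ ≤ 3⁻¹ := by gcongr; exact_mod_cast hi3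
    have := Finset.single_le_sum (f := fun i => 2⁻¹ - (e i : ℚ)⁻¹) (fun i _ => hterm i)
      (Finset.mem_univ i)
    linarith
  · have hq : (5 : ℚ) ≤ (4 * g + Fintype.card ι : ℕ) := by exact_mod_cast hgt
    linarith

end Hurwitz

section RiemannHurwitz

open Module

variable {G X : Type*} [Group G] [MulAction G X] (S : Subgroup G)

/-- The order of the cone point `ω` of the quotient `X / (G ⧸ S)`, where `S` is a subgroup
acting trivially: the order of a point stabilizer modulo `S`. -/
noncomputable def ramificationIndex (ω : MulAction.orbitRel.Quotient G X) : ℕ :=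
  S.relIndex (MulAction.stabilizer G ω.out)

variable {S}

lemma sum_card_fixedBy_eq_card_orbits_mul_card [Fintype G] [Finite X] :
    ∑ g : G, Nat.card (MulAction.fixedBy X g) =
      Nat.card (MulAction.orbitRel.Quotient G X) * Nat.card G := by
  classical
  have := Fintype.ofFinite X
  simpa only [Nat.card_eq_fintype_card] using
    MulAction.sum_card_fixedBy_eq_card_orbits_mul_card_group G X

variable {L V : Type*} [Field L] [AddCommGroup V] [Module L V]
  {ρ : Representation L G V} {m : ℕ}

lemma sum_character_add_sum_card_fixedBy [Fintype G] (hS : ∀ g ∈ S, ∀ x : X, g • x = x)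
    (hχS : ∀ g ∈ S, ρ.character g + ρ.character g⁻¹ = m + 2)
    (hχ : ∀ g ∉ S, ρ.character g + ρ.character g⁻¹ = 2 - Nat.card (MulAction.fixedBy X g)) :
    ∑ g, (ρ.character g + ρ.character g⁻¹) + ∑ g : G, (Nat.card (MulAction.fixedBy X g) : L) =
      2 * Nat.card G + Nat.card S * (m + Nat.card X) := by
  classical
  have hpoint (g : G) : (ρ.character g + ρ.character g⁻¹) +
      (Nat.card (MulAction.fixedBy X g) : L) = 2 + if g ∈ S then (m + Nat.card X : L) else 0 := by
    split_ifs with hg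
    · have hcard : Nat.card (MulAction.fixedBy X g) = Nat.card X :=
        Nat.card_congr (Equiv.subtypeUnivEquiv fun x => hS g hg x)
      rw [hχS g hg, hcard]
      ring
    · rw [hχ g hg]
      ring
  rw [← Finset.sum_add_distrib, Finset.sum_congr rfl fun g _ => hpoint g,
    Finset.sum_add_distrib, ← Finset.sum_filter, Finset.sum_const, Finset.sum_const,
    nsmul_eq_mul, nsmul_eq_mul, Finset.card_univ, ← Fintype.card_subtype,
    ← Nat.card_eq_fintype_card, ← Nat.card_eq_fintype_card, mul_comm 2]

variable [CharZero L] [FiniteDimensional L V]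

lemma sum_character_add_character_inv [Fintype G] (ρ : Representation L G V) :
    ∑ g, (ρ.character g + ρ.character g⁻¹) = 2 * (Nat.card G * finrank L ρ.invariants) := by
  have hG : (Nat.card G : L) ≠ 0 := Nat.cast_ne_zero.2 Nat.card_pos.ne'
  have := invertibleOfNonzero hG
  have hsum : ∑ g, ρ.character g = Nat.card G * finrank L ρ.invariants := by
    rw [← ρ.card_inv_mul_sum_char_eq_finrank, mul_inv_cancel_left₀ hG]
  have hsum_inv : ∑ g, ρ.character g⁻¹ = ∑ g, ρ.character g :=
    Equiv.sum_comp (Equiv.inv G) ρ.character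
  rw [Finset.sum_add_distrib, hsum_inv, hsum]
  ring

variable [Finite G]

lemma ramificationIndex_ne_zero (ω : MulAction.orbitRel.Quotient G X) :
    ramificationIndex S ω ≠ 0 :=
  Subgroup.index_ne_zero_of_finite

lemma two_le_ramificationIndex (hfix : ∀ x : X, ∃ g ∉ S, g • x = x)
    (ω : MulAction.orbitRel.Quotient G X) : 2 ≤ ramificationIndex S ω := by
  obtain ⟨g, hgS, hg⟩ := hfix ω.out
  have h0 := ramificationIndex_ne_zero (S := S) ω
  have h1 : ramificationIndex S ω ≠ 1 := fun h => hgS (Subgroup.relIndex_eq_one.1 h hg)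
  omega

lemma card_mul_index_stabilizer (hS : ∀ g ∈ S, ∀ x : X, g • x = x)
    (ω : MulAction.orbitRel.Quotient G X) :
    (Nat.card S * Nat.card (G ⧸ MulAction.stabilizer G ω.out) : ℚ) =
      Nat.card G * (ramificationIndex S ω : ℚ)⁻¹ := by
  have he : (ramificationIndex S ω : ℚ) ≠ 0 := Nat.cast_ne_zero.2 (ramificationIndex_ne_zero ω)
  rw [eq_mul_inv_iff_mul_eq₀ he]
  have hG := (MulAction.stabilizer G ω.out).card_mul_index
  have hstab : Nat.card S * ramificationIndex S ω = Nat.card (MulAction.stabilizer G ω.out) := by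
    simpa only [Subgroup.relIndex_bot_left, ramificationIndex] using
      Subgroup.relIndex_mul_relIndex ⊥ S _ bot_le fun g hg => hS g hg _
  norm_cast
  rw [← hG, ← hstab, Subgroup.index]
  ring

lemma card_mul_card_eq_sum_inv_ramificationIndex
    [Fintype (MulAction.orbitRel.Quotient G X)] (hS : ∀ g ∈ S, ∀ x : X, g • x = x) :
    (Nat.card S * Nat.card X : ℚ) =
      Nat.card G * ∑ ω : MulAction.orbitRel.Quotient G X, (ramificationIndex S ω : ℚ)⁻¹ := by
  rw [Nat.card_congr (MulAction.selfEquivSigmaOrbitsQuotientStabilizer G X), Nat.card_sigma,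
    Nat.cast_sum, Finset.mul_sum, Finset.mul_sum]
  exact Finset.sum_congr rfl fun ω _ => card_mul_index_stabilizer hS ω

theorem card_mul_orbifoldArea [Finite X] [Fintype (MulAction.orbitRel.Quotient G X)]
    (hS : ∀ g ∈ S, ∀ x : X, g • x = x)
    (hχS : ∀ g ∈ S, ρ.character g + ρ.character g⁻¹ = m + 2)
    (hχ : ∀ g ∉ S, ρ.character g + ρ.character g⁻¹ = 2 - Nat.card (MulAction.fixedBy X g)) :
    Nat.card G * orbifoldArea (finrank L ρ.invariants)
      (ramificationIndex (X := X) S) = Nat.card S * m := by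
  have := Fintype.ofFinite G
  have hsum := sum_character_add_sum_card_fixedBy hS hχS hχ
  rw [sum_character_add_character_inv, ← Nat.cast_sum,
    sum_card_fixedBy_eq_card_orbits_mul_card, Nat.card_eq_fintype_card
      (α := MulAction.orbitRel.Quotient G X)] at hsum
  have hsumQ : (2 * (Nat.card G * finrank L ρ.invariants) +
      Fintype.card (MulAction.orbitRel.Quotient G X) * Nat.card G : ℚ) =
        2 * Nat.card G + Nat.card S * (m + Nat.card X) := mod_cast hsum
  have hX := card_mul_card_eq_sum_inv_ramificationIndex hS
  simp only [orbifoldArea, Finset.sum_sub_distrib, Finset.sum_const, Finset.card_univ,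
    nsmul_eq_mul]
  linear_combination hsumQ + hX

theorem card_le_of_character_add_character_inv [Finite X] (hm : 0 < m)
    (hS : ∀ g ∈ S, ∀ x : X, g • x = x) (hfix : ∀ x : X, ∃ g ∉ S, g • x = x)
    (hχS : ∀ g ∈ S, ρ.character g + ρ.character g⁻¹ = m + 2)
    (hχ : ∀ g ∉ S, ρ.character g + ρ.character g⁻¹ = 2 - Nat.card (MulAction.fixedBy X g)) :
    Nat.card G ≤ 42 * (Nat.card S * m) := by
  have := Fintype.ofFinite (MulAction.orbitRel.Quotient G X)
  have harea := card_mul_orbifoldArea hS hχS hχ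
  have hG : (0 : ℚ) < Nat.card G := Nat.cast_pos.2 Nat.card_pos
  have hS0 : (0 : ℚ) < Nat.card S * m := by
    have := Nat.card_pos (α := S)
    positivity
  have hle := one_div_42_le_orbifoldArea (two_le_ramificationIndex hfix)
    (pos_of_mul_pos_right (harea ▸ hS0) hG.le)
  have : (Nat.card G : ℚ) ≤ 42 * (Nat.card S * m) := by
    rw [← harea]
    nlinarith
  exact_mod_cast this

end RiemannHurwitz

section PotentialGroup

variable {σ L : Type*} [Fintype σ] [DecidableEq σ] [Field L]

/-- The group of linear automorphisms that preserve the potential `Ω` up to the determinant. -/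
def potentialGroup (Ω : MvPolynomial σ L) : Subgroup (GL σ L) where
  carrier := {g | PreservesUpToDet Ω g.val}
  mul_mem' hg hh := hg.mul hh
  one_mem' := .one
  inv_mem' {g} hg := hg.of_mul_eq_one g.mul_inv

/-- The scalar matrices in `potentialGroup Ω`. -/
def scalarSubgroup (Ω : MvPolynomial σ L) : Subgroup (potentialGroup Ω) :=
  (Subgroup.center (GL σ L)).subgroupOf (potentialGroup Ω)

variable {Ω : MvPolynomial σ L} {n : ℕ}

instance : (scalarSubgroup Ω).Normal :=
  Subgroup.normal_subgroupOf

lemma finite_potentialGroup [CharZero L] [IsAlgClosed L] {d : ℕ} (hom : Ω.IsHomogeneous d)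
    (hd : 3 ≤ d) (hcard : d ≠ Fintype.card σ) (hΩ : IsNonsingular Ω) :
    Finite (potentialGroup Ω) := by
  have := (finite_setOf_preservesUpToDet hom hd hcard hΩ).to_subtype
  exact Finite.of_injective
    (fun g : potentialGroup Ω => (⟨g.1.val, g.1.det_ne_zero, g.2⟩ :
      {M : Matrix σ σ L | M.det ≠ 0 ∧ PreservesUpToDet Ω M}))
    fun g h hgh => Subtype.ext (Units.ext (congrArg Subtype.val hgh))

lemma linSubst_scalar {d : ℕ} (hom : Ω.IsHomogeneous d) (c : L) :
    linSubst (Matrix.scalar σ c) Ω = C (c ^ d) * Ω := by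
  ext m
  rw [scalar_apply, coeff_linSubst_diagonal, coeff_C_mul, Finset.prod_pow_eq_pow_sum]
  by_cases hm : coeff m Ω = 0
  · simp [hm]
  · rw [← Finsupp.degree_eq_sum, degree_of_mem_support hom (mem_support_iff.2 hm)]

lemma pow_eq_one_of_scalar_mem_potentialGroup (hom : Ω.IsHomogeneous (n + Fintype.card σ))
    (hΩ : Ω ≠ 0) {c : Lˣ} (hc : GeneralLinearGroup.scalar σ c ∈ potentialGroup Ω) :
    c ^ n = 1 := by
  have hpres : PreservesUpToDet Ω (GeneralLinearGroup.scalar σ c).val := hc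
  rw [PreservesUpToDet, GeneralLinearGroup.coe_scalar, linSubst_scalar hom] at hpres
  have hpow := C_injective _ _ (mul_right_cancel₀ hΩ hpres)
  rw [scalar_apply, det_diagonal, Finset.prod_const, Finset.card_univ, pow_add] at hpow
  exact Units.ext (mul_left_eq_self₀.1 hpow |>.resolve_right (pow_ne_zero _ c.ne_zero))

lemma exists_eq_scalar_of_mem_scalarSubgroup (hom : Ω.IsHomogeneous (n + Fintype.card σ))
    (hΩ : Ω ≠ 0) {g : potentialGroup Ω} (hg : g ∈ scalarSubgroup Ω) :
    ∃ c : Lˣ, c ^ n = 1 ∧ GeneralLinearGroup.scalar σ c = g.1 := by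
  rw [scalarSubgroup, Subgroup.mem_subgroupOf, GeneralLinearGroup.center_eq_range_scalar] at hg
  obtain ⟨c, hc⟩ := hg
  exact ⟨c, pow_eq_one_of_scalar_mem_potentialGroup hom hΩ (hc ▸ g.2), hc⟩

lemma card_scalarSubgroup_le (hom : Ω.IsHomogeneous (n + Fintype.card σ)) (hΩ : Ω ≠ 0)
    (hn : n ≠ 0) : Nat.card (scalarSubgroup Ω) ≤ n := by
  have : NeZero n := ⟨hn⟩
  choose c hpow hc using
    fun g : scalarSubgroup Ω => exists_eq_scalar_of_mem_scalarSubgroup hom hΩ g.2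
  refine le_trans (Nat.card_le_card_of_injective
    (fun g => (⟨c g, hpow g⟩ : rootsOfUnity n L)) fun g h hgh => ?_) (card_rootsOfUnity L n)
  have hcgh : c g = c h := congrArg Subtype.val hgh
  exact Subtype.ext (Subtype.ext (by rw [← hc g, ← hc h, hcgh]))

open scoped LinearAlgebra.Projectivization

lemma smul_eq_self_of_mem_scalarSubgroup {g : potentialGroup Ω} (hg : g ∈ scalarSubgroup Ω)
    (p : ℙ L (σ → L)) : g • p = p := by
  obtain ⟨c, hc⟩ := GeneralLinearGroup.mem_center_iff_val_mem_range_scalar.1 hg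
  induction p with | h v hv
  refine (mk_mem_fixedBy (g := g.1) hv).2 ⟨c, ?_⟩
  rw [show g.1.val = scalar σ c from hc.symm, scalar_apply, ← smul_one_eq_diagonal, smul_mulVec,
    one_mulVec]

/-- The points of the curve `Ω = 0` with nontrivial stabilizer modulo scalars: the ramification
points of the quotient map by `potentialGroup Ω`. -/
def ramificationPoints (hom : Ω.IsHomogeneous n) :
    SubMulAction (potentialGroup Ω) (ℙ L (σ → L)) where
  carrier := {p ∈ projZeroLocus Ω | ∃ g ∉ scalarSubgroup Ω, g • p = p}
  smul_mem' := by
    rintro h p ⟨hp, g, hg, hgp⟩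
    refine ⟨?_, h * g * h⁻¹, fun hmem => hg ?_, by rw [mul_smul, mul_smul, inv_smul_smul, hgp]⟩
    · rw [Subgroup.smul_def, smul_mem_projZeroLocus hom, show linSubst h.1.val Ω = _ from h.2]
      exact (map_mul (eval _) _ _).trans (by rw [show eval p.rep Ω = 0 from hp, mul_zero])
    · simpa [mul_assoc] using (inferInstance : (scalarSubgroup Ω).Normal).conj_mem _ hmem h⁻¹

lemma card_fixedBy_ramificationPoints (hom : Ω.IsHomogeneous n) {g : potentialGroup Ω}
    (hg : g ∉ scalarSubgroup Ω) : Nat.card (MulAction.fixedBy (ramificationPoints hom) g) =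
      (projZeroLocus Ω ∩ MulAction.fixedBy _ g.1).ncard :=
  Nat.card_congr
    { toFun p := ⟨p.1.1, p.1.2.1, congrArg Subtype.val p.2⟩
      invFun q := ⟨⟨q.1, q.2.1, g, hg, q.2.2⟩, Subtype.ext q.2.2⟩
      left_inv _ := rfl
      right_inv _ := rfl }

end PotentialGroup

section GroupOrder

variable {L : Type*} [Field L] {Ω : MvPolynomial (Fin 3) L} {n : ℕ}

lemma character_formRep_add_inv_of_mem_scalarSubgroup [CharZero L]
    (hom : Ω.IsHomogeneous (n + 3)) (hΩ : Ω ≠ 0) {g : potentialGroup Ω}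
    (hg : g ∈ scalarSubgroup Ω) :
    (formRep (Fin 3) L n).character g.1 + (formRep (Fin 3) L n).character g.1⁻¹ =
      (n * (n + 3) : ℕ) + 2 := by
  obtain ⟨c, hpow, hc⟩ := exists_eq_scalar_of_mem_scalarSubgroup hom hΩ hg
  have hpow' : (c : L) ^ n = 1 := by rw [← Units.val_pow_eq_pow_val, hpow, Units.val_one]
  have hdiag : g.1.val = diagonal ![(c : L), c, c] := by
    rw [← hc, GeneralLinearGroup.coe_scalar, scalar_apply]
    congr 1
    ext i
    fin_cases i <;> rfl
  have hinv : ![(c : L), c, c]⁻¹ = ![(c : L)⁻¹, (c : L)⁻¹, (c : L)⁻¹] := by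
    ext i
    fin_cases i <;> rfl
  have h := two_mul_completeHomogeneous_triple_self (c : L) n
  have h' := two_mul_completeHomogeneous_triple_self (c : L)⁻¹ n
  rw [hpow'] at h
  rw [inv_pow, hpow', inv_one] at h'
  rw [character_add_character_inv_of_eq_diagonal hdiag, hinv]
  push_cast
  linear_combination (h + h') / 2

theorem card_potentialGroup_le [CharZero L] [IsAlgClosed L] (hom : Ω.IsHomogeneous (n + 3))
    (hn : 0 < n) (hΩ : IsNonsingular Ω) :
    Nat.card (potentialGroup Ω) ≤ 42 * (n + 3) * n ^ 2 := by
  have := finite_potentialGroup hom (by omega) (by simp [hn.ne']) hΩ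
  have lefschetz (g : potentialGroup Ω) (hg : g ∉ scalarSubgroup Ω) : LefschetzFormula Ω n g.1 :=
    lefschetzFormula hom hΩ g.2
      ((potentialGroup Ω).subtype.isOfFinOrder (isOfFinOrder_of_finite g)) hg
  have : Finite (ramificationPoints hom) :=
    (Set.finite_iUnion fun g : {g // g ∉ scalarSubgroup Ω} =>
      (lefschetz g.1 g.2).1).subset fun p ⟨hp, g, hg, hgp⟩ => Set.mem_iUnion.2 ⟨⟨g, hg⟩, hp, hgp⟩
  calc
    Nat.card (potentialGroup Ω) ≤ 42 * (Nat.card (scalarSubgroup Ω) * (n * (n + 3))) :=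
      card_le_of_character_add_character_inv (X := ramificationPoints hom)
        (ρ := (formRep (Fin 3) L n).comp (potentialGroup Ω).subtype) (by positivity)
        (fun g hg p => Subtype.ext (smul_eq_self_of_mem_scalarSubgroup hg p.1))
        (fun ⟨_, _, g, hg, hgp⟩ => ⟨g, hg, Subtype.ext hgp⟩)
        (fun g hg => character_formRep_add_inv_of_mem_scalarSubgroup hom hΩ.ne_zero hg)
        (fun g hg => by
          rw [card_fixedBy_ramificationPoints hom hg]
          exact (lefschetz g hg).2)
    _ ≤ 42 * (n * (n * (n + 3))) := by
      gcongr
      exact card_scalarSubgroup_le hom hΩ.ne_zero hn.ne'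
    _ = 42 * (n + 3) * n ^ 2 := by ring

end GroupOrder

section JacobianIdeal

attribute [local instance] MvPolynomial.gradedAlgebra in
lemma X_mem_radical_of_finite_quotient {σ k : Type*} [Field k] {J : Ideal (MvPolynomial σ k)}
    (hJ : J.IsHomogeneous (homogeneousSubmodule σ k)) [Module.Finite k (MvPolynomial σ k ⧸ J)]
    (i : σ) : X i ∈ J.radical := by
  obtain ⟨p, hp, hp0⟩ := Algebra.IsIntegral.isIntegral (R := k) (Ideal.Quotient.mk J (X i))
  have hmem : Polynomial.aeval (X i : MvPolynomial σ k) p ∈ J := by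
    rw [← Ideal.Quotient.eq_zero_iff_mem, ← hp0]
    exact (Polynomial.aeval_algHom_apply (Ideal.Quotient.mkₐ k J) (X i) p).symm
  have hcomp : homogeneousComponent p.natDegree (Polynomial.aeval (X i : MvPolynomial σ k) p) =
      X i ^ p.natDegree := by
    rw [Polynomial.aeval_eq_sum_range, map_sum, Finset.sum_eq_single p.natDegree]
    · rw [hp.coeff_natDegree, one_smul, homogeneousComponent_eq_self (isHomogeneous_X_pow i _)]
    · intro m _ hm
      rw [map_smul, homogeneousComponent_of_mem (isHomogeneous_X_pow i m), if_neg hm.symm,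
        smul_zero]
    · simp
  exact ⟨p.natDegree, hcomp ▸ homogeneousComponent_mem_of_mem hJ hmem _⟩

/-- The ideal generated by the partial derivatives of `Ω`. The singularity of `Ω` at the origin is
isolated when every variable lies in its radical. -/
noncomputable def jacobianIdeal {σ R : Type*} [CommRing R] (Ω : MvPolynomial σ R) :
    Ideal (MvPolynomial σ R) :=
  Ideal.span (Set.range fun i => pderiv i Ω)

variable {σ R L : Type*} [CommRing R] [Field L]

attribute [local instance] MvPolynomial.gradedAlgebra in
lemma X_mem_radical_jacobianIdeal {Ω : MvPolynomial σ L} {d : ℕ} (hom : Ω.IsHomogeneous d)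
    [Module.Finite L (MvPolynomial σ L ⧸ jacobianIdeal Ω)] (i : σ) :
    X i ∈ (jacobianIdeal Ω).radical := by
  refine X_mem_radical_of_finite_quotient (J := jacobianIdeal Ω)
    (Ideal.homogeneous_span _ _ ?_) i
  rintro _ ⟨j, rfl⟩
  exact ⟨d - 1, hom.pderiv⟩

lemma X_mem_radical_jacobianIdeal_map {S : Type*} [CommRing S] (φ : R →+* S)
    {Ω : MvPolynomial σ R} {i : σ} (h : X i ∈ (jacobianIdeal Ω).radical) :
    X i ∈ (jacobianIdeal (MvPolynomial.map φ Ω)).radical := by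
  have hmap : (jacobianIdeal Ω).map (MvPolynomial.map φ) =
      jacobianIdeal (MvPolynomial.map φ Ω) := by
    rw [jacobianIdeal, Ideal.map_span, ← Set.range_comp]
    simp only [jacobianIdeal, Function.comp_def, pderiv_map]
  rw [← hmap, ← map_X φ i]
  exact Ideal.map_radical_le _ (Ideal.mem_map_of_mem _ h)

lemma isNonsingular_of_X_mem_radical {Ω : MvPolynomial σ L}
    (h : ∀ i, X i ∈ (jacobianIdeal Ω).radical) : IsNonsingular Ω := by
  intro v hv
  ext i
  obtain ⟨N, hN⟩ := h i
  have hle : jacobianIdeal Ω ≤ RingHom.ker (eval v) := by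
    rw [jacobianIdeal, Ideal.span_le]
    rintro _ ⟨j, rfl⟩
    exact hv j
  have hpow : v i ^ N = 0 := by simpa using hle hN
  exact eq_zero_of_pow_eq_zero hpow

lemma squarefree_of_X_mem_radical [Nontrivial σ] {Ω : MvPolynomial σ L}
    (h : ∀ i, X i ∈ (jacobianIdeal Ω).radical) : Squarefree Ω := by
  rintro a ⟨c, rfl⟩
  have hle : jacobianIdeal (a * a * c) ≤ Ideal.span {a} := by
    rw [jacobianIdeal, Ideal.span_le]
    rintro _ ⟨j, rfl⟩
    simp only [SetLike.mem_coe, Ideal.mem_span_singleton, Derivation.leibniz, smul_eq_mul]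
    exact ⟨a * pderiv j c + c * pderiv j a + c * pderiv j a, by ring⟩
  obtain ⟨i, j, hij⟩ := exists_pair_ne σ
  obtain ⟨N, hN⟩ := h i
  obtain ⟨N', hN'⟩ := h j
  have hrel : IsRelPrime (X i ^ N : MvPolynomial σ L) (X j ^ N') :=
    IsRelPrime.pow (((X_prime (R := L) (i := i)).irreducible.isRelPrime_iff_not_dvd).2
      (by rwa [X_dvd_X]))
  exact hrel (Ideal.mem_span_singleton.1 (hle hN)) (Ideal.mem_span_singleton.1 (hle hN'))

end JacobianIdeal

section LeadingComponent

variable {σ R L : Type*} [CommRing R] [Field L]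

lemma homogeneousComponent_mul_of_totalDegree_le {p q : MvPolynomial σ R} {m n : ℕ}
    (hp : p.totalDegree ≤ m) (hq : q.totalDegree ≤ n) :
    homogeneousComponent (m + n) (p * q) = homogeneousComponent m p * homogeneousComponent n q := by
  classical
  ext s
  rw [coeff_homogeneousComponent]
  split_ifs with hs
  · rw [coeff_mul, coeff_mul]
    refine Finset.sum_congr rfl fun x hx => ?_
    rw [← Finset.HasAntidiagonal.mem_antidiagonal.1 hx, map_add] at hs
    rw [coeff_homogeneousComponent, coeff_homogeneousComponent]
    rcases lt_trichotomy x.1.degree m with h | h | h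
    · rw [coeff_eq_zero_of_totalDegree_lt (d := x.2) (by rw [← Finsupp.degree_apply]; omega),
        if_neg h.ne]
      simp
    · rw [if_pos h, if_pos (by omega)]
    · rw [coeff_eq_zero_of_totalDegree_lt (d := x.1) (by rw [← Finsupp.degree_apply]; omega)]
      simp
  · exact (((homogeneousComponent_isHomogeneous m p).mul
      (homogeneousComponent_isHomogeneous n q)).coeff_eq_zero hs).symm

/-- Pairs consisting of a polynomial of total degree at most `n` and its homogeneous component of
degree `n`, the analogue of `leadingCoeffPairs` for several variables. -/
def leadingComponentPairs (σ R : Type*) [CommRing R] (n : ℕ) :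
    Submodule R (MvPolynomial σ R × MvPolynomial σ R) where
  carrier := {p | p.1.totalDegree ≤ n ∧ homogeneousComponent n p.1 = p.2}
  add_mem' := fun ⟨ha, ha'⟩ ⟨hb, hb'⟩ =>
    ⟨(totalDegree_add _ _).trans (max_le ha hb), by simp [ha', hb']⟩
  zero_mem' := by simp
  smul_mem' := fun c _ ⟨ha, ha'⟩ => ⟨(totalDegree_smul_le _ _).trans ha, by simp [ha']⟩

instance : SetLike.GradedMonoid (leadingComponentPairs σ R) where
  one_mem := ⟨by simp, homogeneousComponent_eq_self (isHomogeneous_one _ _)⟩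
  mul_mem := fun _ _ _ _ ⟨ha, ha'⟩ ⟨hb, hb'⟩ =>
    ⟨(totalDegree_mul _ _).trans (add_le_add ha hb), by
      rw [Prod.fst_mul, Prod.snd_mul, homogeneousComponent_mul_of_totalDegree_le ha hb, ha', hb']⟩

lemma totalDegree_aeval_le_and_homogeneousComponent_aeval {τ : Type*} {f : τ → MvPolynomial σ R}
    {k : ℕ} (hf : ∀ i, (f i).totalDegree ≤ k) {g : MvPolynomial τ R} {n : ℕ}
    (hg : g.IsHomogeneous n) :
    (aeval f g).totalDegree ≤ n * k ∧ homogeneousComponent (n * k) (aeval f g) =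
      aeval (fun i => homogeneousComponent k (f i)) g := by
  have h := aeval_mem_graded (leadingComponentPairs σ R) hg
    (y := fun i => (f i, homogeneousComponent k (f i))) fun i => ⟨hf i, rfl⟩
  have h₁ := comp_aeval_apply (fun i => (f i, homogeneousComponent k (f i)))
    (AlgHom.fst R (MvPolynomial σ R) (MvPolynomial σ R)) g
  have h₂ := comp_aeval_apply (fun i => (f i, homogeneousComponent k (f i)))
    (AlgHom.snd R (MvPolynomial σ R) (MvPolynomial σ R)) g
  exact ⟨h₁ ▸ h.1, (congrArg (homogeneousComponent (n * k)) h₁).symm.trans (h.2.trans h₂)⟩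

lemma totalDegree_pderiv_le (i : σ) (p : MvPolynomial σ R) :
    (pderiv i p).totalDegree ≤ p.totalDegree - 1 := by
  refine Finset.sup_le fun m hm => Nat.le_sub_of_add_le ?_
  have hm' : m + Finsupp.single i 1 ∈ p.support := by
    contrapose! hm
    rw [notMem_support_iff] at hm ⊢
    rw [coeff_pderiv, hm, zero_mul]
  have hle : (m + Finsupp.single i 1).degree ≤ p.totalDegree := le_totalDegree hm'
  rwa [map_add, Finsupp.degree_single] at hle

lemma totalDegree_det_le {ι : Type*} [Fintype ι] [DecidableEq ι]
    {A : Matrix ι ι (MvPolynomial σ R)} {b : ι → ℕ} (hA : ∀ i j, (A i j).totalDegree ≤ b i) :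
    A.det.totalDegree ≤ ∑ i, b i := by
  rw [det_apply]
  refine totalDegree_finsetSum_le fun π _ => (totalDegree_smul_le _ _).trans ?_
  refine (totalDegree_finsetProd _ _).trans ?_
  rw [← Equiv.sum_comp π b]
  exact Finset.sum_le_sum fun i _ => hA _ _

lemma totalDegree_sub_homogeneousComponent_lt {p : MvPolynomial σ R} {n : ℕ}
    (hp : p.totalDegree ≤ n) (hn : 0 < n) :
    (p - homogeneousComponent n p).totalDegree < n := by
  refine (Finset.sup_lt_iff hn).2 fun m hm => ?_
  rw [mem_support_iff, coeff_sub, coeff_homogeneousComponent] at hm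
  refine lt_of_le_of_ne (a := m.degree) ?_ fun h => hm (by rw [if_pos h, sub_self])
  contrapose! hm
  rw [if_neg hm.ne', sub_zero]
  exact coeff_eq_zero_of_totalDegree_lt (hp.trans_lt hm)

lemma exists_eq_toMvPolynomial_add_C [Fintype σ] {τ : Type*} {g : τ → MvPolynomial σ R}
    (hg : ∀ i, (g i).totalDegree ≤ 1) :
    ∃ (M : Matrix τ σ R) (v : τ → R), ∀ i, g i = M.toMvPolynomial i + C (v i) := by
  have hlin (i : τ) : ∃ c : σ → R, ∑ j, c j • X j = homogeneousComponent 1 (g i) := by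
    have hmem := homogeneousComponent_mem 1 (g i)
    rw [homogeneousSubmodule_one_eq_span_X] at hmem
    exact (Submodule.mem_span_range_iff_exists_fun R).1 hmem
  choose M hM using hlin
  refine ⟨M, fun i => coeff 0 (g i - homogeneousComponent 1 (g i)), fun i => ?_⟩
  have hconst := totalDegree_eq_zero_iff_eq_C.1
    (Nat.lt_one_iff.1 (totalDegree_sub_homogeneousComponent_lt (hg i) one_pos))
  have hform : Matrix.toMvPolynomial M i = homogeneousComponent 1 (g i) := by
    simp only [← hM i, Matrix.toMvPolynomial, smul_eq_C_mul, C_mul_X_eq_monomial]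
  rw [← hconst, hform, add_sub_cancel]

end LeadingComponent

section AffineHypersurface

variable {σ L : Type*} [Field L] {Ω : MvPolynomial σ L} {d : ℕ} {ξ : L}

lemma totalDegree_sub_C (hom : Ω.IsHomogeneous d) (hd : 0 < d) (hΩ : Ω ≠ 0) (ξ : L) :
    (Ω - C ξ).totalDegree = d := by
  have hdeg := hom.totalDegree hΩ
  rw [sub_eq_add_neg, ← C_neg, totalDegree_add_eq_left_of_totalDegree_lt, hdeg]
  rwa [totalDegree_C, hdeg]

lemma eq_zero_of_sub_C_dvd (hom : Ω.IsHomogeneous d) (hd : 0 < d) (hΩ : Ω ≠ 0)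
    {p : MvPolynomial σ L} (hp : Ω - C ξ ∣ p) (hdeg : p.totalDegree < d) : p = 0 := by
  by_contra hp0
  have hle := totalDegree_le_of_dvd_of_isDomain hp hp0
  rw [totalDegree_sub_C hom hd hΩ] at hle
  omega

lemma dvd_homogeneousComponent_of_sub_C_dvd (hom : Ω.IsHomogeneous d) (hd : 0 < d) (hΩ : Ω ≠ 0)
    {p : MvPolynomial σ L} (hp : Ω - C ξ ∣ p) {n : ℕ} (hn : p.totalDegree ≤ n) :
    Ω ∣ homogeneousComponent n p := by
  obtain ⟨q, rfl⟩ := hp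
  rcases eq_or_ne q 0 with rfl | hq
  · simp
  have hdeg := totalDegree_sub_C hom hd hΩ ξ
  have hw : Ω - C ξ ≠ 0 := by
    rintro h
    rw [h, totalDegree_zero] at hdeg
    omega
  rw [totalDegree_mul_of_isDomain hw hq, hdeg] at hn
  obtain ⟨m, rfl⟩ := Nat.exists_eq_add_of_le (show d ≤ n by omega)
  rw [homogeneousComponent_mul_of_totalDegree_le hdeg.le (by omega), map_sub,
    homogeneousComponent_eq_self hom, homogeneousComponent_eq_zero _ _ (by rwa [totalDegree_C]),
    sub_zero]
  exact dvd_mul_right _ _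

/-- A leading component divisible by `Ω` can be traded for terms of lower degree. -/
lemma exists_sub_C_dvd_sub_and_not_dvd_homogeneousComponent (hom : Ω.IsHomogeneous d) (hd : 0 < d)
    (hΩ : Ω ≠ 0) (ξ : L) (p : MvPolynomial σ L) :
    ∃ q, Ω - C ξ ∣ p - q ∧
      (0 < q.totalDegree → ¬ Ω ∣ homogeneousComponent q.totalDegree q) := by
  induction hn : p.totalDegree using Nat.strong_induction_on generalizing p with
  | _ n ih =>
    by_cases hp : 0 < n → ¬ Ω ∣ homogeneousComponent n p
    · exact ⟨p, by simp, hn ▸ hp⟩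
    push Not at hp
    obtain ⟨hn0, b, hb⟩ := hp
    have hlow : (C ξ * b).totalDegree < n := by
      refine (totalDegree_mul _ _).trans_lt ?_
      rw [totalDegree_C, zero_add]
      rcases eq_or_ne b 0 with rfl | hb0
      · simpa
      · have hdeg := (homogeneousComponent_isHomogeneous n p).totalDegree_le
        rw [hb, totalDegree_mul_of_isDomain hΩ hb0, hom.totalDegree hΩ] at hdeg
        omega
    obtain ⟨q, hq, hq'⟩ := ih _ ((totalDegree_add _ _).trans_lt
      (max_lt (totalDegree_sub_homogeneousComponent_lt hn.le hn0) hlow)) _ rfl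
    refine ⟨q, ?_, hq'⟩
    have hsub : p - q = (Ω - C ξ) * b + (p - homogeneousComponent n p + C ξ * b - q) := by
      rw [hb]
      ring
    exact hsub ▸ dvd_add (dvd_mul_right _ _) hq

lemma dvd_aeval_sub_aeval {R A : Type*} [CommRing R] [CommRing A] [Algebra R A] {w : A}
    {f g : σ → A} (h : ∀ i, w ∣ f i - g i) (p : MvPolynomial σ R) :
    w ∣ aeval f p - aeval g p := by
  simp only [← Ideal.mem_span_singleton, ← Ideal.Quotient.eq] at h ⊢
  have hcomp (f : σ → A) := comp_aeval_apply f (Ideal.Quotient.mkₐ R (Ideal.span {w})) p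
  simp only [Ideal.Quotient.mkₐ_eq_mk] at hcomp
  rw [hcomp, hcomp, funext h]

end AffineHypersurface

section JacobianBracket

variable {R L : Type*} [CommRing R] [Field L]

lemma jacBracket_eq (Ω f g : MvPolynomial (Fin 3) R) : jacBracket Ω f g =
    (pderiv 1 f * pderiv 2 g - pderiv 2 f * pderiv 1 g) * pderiv 0 Ω +
    (pderiv 2 f * pderiv 0 g - pderiv 0 f * pderiv 2 g) * pderiv 1 Ω +
    (pderiv 0 f * pderiv 1 g - pderiv 1 f * pderiv 0 g) * pderiv 2 Ω := by
  rw [jacBracket, det_fin_three]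
  simp only [of_apply, cons_val]
  ring

lemma jacBracket_X_add_one_X_add_two (Ω : MvPolynomial (Fin 3) R) (k : Fin 3) :
    jacBracket Ω (X (k + 1)) (X (k + 2)) = pderiv k Ω := by
  fin_cases k <;> simp [jacBracket_eq, pderiv_X]

lemma jacBracket_eq_sum (Ω f g : MvPolynomial (Fin 3) R) :
    jacBracket Ω f g = ∑ i, ∑ j, pderiv i f * pderiv j g * jacBracket Ω (X i) (X j) := by
  simp only [Fin.sum_univ_three, jacBracket_eq, pderiv_X, Pi.single_apply, Fin.isValue,
    Fin.reduceEq, if_true, if_false]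
  ring

lemma map_jacBracket {S : Type*} [CommRing S] (φ : R →+* S) (Ω f g : MvPolynomial (Fin 3) R) :
    MvPolynomial.map φ (jacBracket Ω f g) =
      jacBracket (MvPolynomial.map φ Ω) (MvPolynomial.map φ f) (MvPolynomial.map φ g) := by
  simp only [jacBracket_eq, pderiv_map, map_add, map_mul, map_sub]

lemma totalDegree_jacBracket_le (Ω f g : MvPolynomial (Fin 3) R) :
    (jacBracket Ω f g).totalDegree ≤
      (f.totalDegree - 1) + (g.totalDegree - 1) + (Ω.totalDegree - 1) := by
  refine (totalDegree_det_le (b := ![_, _, _]) fun i j => ?_).trans (Fin.sum_univ_three _).le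
  fin_cases i <;> fin_cases j <;> exact totalDegree_pderiv_le _ _

/-- The ideal of `Ω - ξ` is Poisson because `Ω` is central. -/
lemma sub_C_dvd_jacBracket_sub_jacBracket {Ω f f' g g' : MvPolynomial (Fin 3) R} {ξ : R}
    (hf : Ω - C ξ ∣ f - f') (hg : Ω - C ξ ∣ g - g') :
    Ω - C ξ ∣ jacBracket Ω f g - jacBracket Ω f' g' := by
  obtain ⟨a, ha⟩ := hf
  obtain ⟨b, hb⟩ := hg
  rw [sub_eq_iff_eq_add] at ha hb
  refine ⟨jacBracket Ω a g + jacBracket Ω f' b, ?_⟩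
  simp only [ha, hb, jacBracket_eq, map_add, map_sub, Derivation.leibniz, smul_eq_mul, pderiv_C,
    sub_zero]
  ring

lemma sum_toMvPolynomial_mul_jacBracket (Ω : MvPolynomial (Fin 3) R)
    (M : Matrix (Fin 3) (Fin 3) R) :
    ∑ k, M.toMvPolynomial k *
        jacBracket Ω (M.toMvPolynomial (k + 1)) (M.toMvPolynomial (k + 2)) =
      C M.det * ∑ k, X k * pderiv k Ω := by
  have hform (i : Fin 3) : M.toMvPolynomial i =
      C (M i 0) * X 0 + C (M i 1) * X 1 + C (M i 2) * X 2 := by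
    simp only [toMvPolynomial, Fin.sum_univ_three, C_mul_X_eq_monomial]
  simp only [Fin.sum_univ_three, Fin.isValue, Fin.reduceAdd, jacBracket_eq, pderiv_toMvPolynomial]
  simp only [hform, det_fin_three, map_add, map_sub, map_mul]
  ring

lemma preservesUpToDet_of_jacBracket_eq [CharZero L] {Ω : MvPolynomial (Fin 3) L} {d : ℕ}
    (hom : Ω.IsHomogeneous d) (hd : d ≠ 0) {M : Matrix (Fin 3) (Fin 3) L}
    (h : ∀ k, jacBracket Ω (M.toMvPolynomial (k + 1)) (M.toMvPolynomial (k + 2)) =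
      linSubst M (pderiv k Ω)) : PreservesUpToDet Ω M := by
  have hsum := sum_toMvPolynomial_mul_jacBracket Ω M
  simp only [h] at hsum
  simp only [← linSubst_X, ← map_mul, ← map_sum, hom.sum_X_mul_pderiv] at hsum
  rw [map_nsmul, mul_smul_comm] at hsum
  exact smul_right_injective _ hd hsum

end JacobianBracket

section Linearity

variable {L : Type*} [Field L] {Ω : MvPolynomial (Fin 3) L} {d : ℕ} {ξ : L}

/-- The substitution `X i ↦ f i` preserves the Jacobian brackets of the coordinates modulo `w`. -/
def RespectsJacBracketMod (Ω w : MvPolynomial (Fin 3) L) (f : Fin 3 → MvPolynomial (Fin 3) L) :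
    Prop :=
  ∀ i j, w ∣ jacBracket Ω (f i) (f j) - aeval f (jacBracket Ω (X i) (X j))

lemma RespectsJacBracketMod.congr {f g : Fin 3 → MvPolynomial (Fin 3) L}
    (hf : RespectsJacBracketMod Ω (Ω - C ξ) f) (hfg : ∀ i, Ω - C ξ ∣ f i - g i) :
    RespectsJacBracketMod Ω (Ω - C ξ) g := by
  intro i j
  have hbr := sub_C_dvd_jacBracket_sub_jacBracket (hfg i) (hfg j)
  have haeval := dvd_aeval_sub_aeval hfg (jacBracket Ω (X i) (X j))
  convert dvd_add (dvd_sub (hf i j) hbr) haeval using 1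
  ring

lemma RespectsJacBracketMod.dvd_sub_aeval_pderiv {w : MvPolynomial (Fin 3) L}
    {f : Fin 3 → MvPolynomial (Fin 3) L} (hf : RespectsJacBracketMod Ω w f) (k : Fin 3) :
    w ∣ jacBracket Ω (f (k + 1)) (f (k + 2)) - aeval f (pderiv k Ω) := by
  simpa only [jacBracket_X_add_one_X_add_two] using hf (k + 1) (k + 2)

/-- If the maximal degree `D` of the `f i` exceeded `1`, the bracket of two of them would have
degree below `(d - 1) * D`, so all partial derivatives of `Ω` would vanish on the `D`-th components
of the `f i` modulo `Ω`. As the singularity is isolated and `Ω` is squarefree, these components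
would themselves be divisible by `Ω`. -/
lemma RespectsJacBracketMod.totalDegree_le_one (hom : Ω.IsHomogeneous d) (hd : 4 ≤ d)
    (hX : ∀ i, X i ∈ (jacobianIdeal Ω).radical) {f : Fin 3 → MvPolynomial (Fin 3) L}
    (hf : RespectsJacBracketMod Ω (Ω - C ξ) f)
    (hred : ∀ i, 0 < (f i).totalDegree → ¬ Ω ∣ homogeneousComponent (f i).totalDegree (f i))
    (i : Fin 3) : (f i).totalDegree ≤ 1 := by
  have hΩ := (isNonsingular_of_X_mem_radical hX).ne_zero
  obtain ⟨i₀, hmax⟩ := Finite.exists_max fun i => (f i).totalDegree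
  refine (hmax i).trans ?_
  by_contra! hD
  set D := (f i₀).totalDegree
  set lead := fun i => homogeneousComponent D (f i)
  have hpderiv (k : Fin 3) : Ω ∣ aeval lead (pderiv k Ω) := by
    obtain ⟨hdeg, hlead⟩ := totalDegree_aeval_le_and_homogeneousComponent_aeval hmax
      (hom.pderiv (i := k))
    have hbr : (jacBracket Ω (f (k + 1)) (f (k + 2))).totalDegree < (d - 1) * D := by
      refine (totalDegree_jacBracket_le _ _ _).trans_lt ?_
      have h₁ := hmax (k + 1)
      have h₂ := hmax (k + 2)
      obtain ⟨e, rfl⟩ := Nat.exists_eq_add_of_le' hd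
      rw [hom.totalDegree hΩ]
      calc _ ≤ (D - 1) + (D - 1) + (e + 4 - 1) := by gcongr
        _ < (e + 3) * D := by
          obtain ⟨m, hm⟩ := Nat.exists_eq_add_of_le' hD
          rw [hm, show m + (1 + 1) - 1 = m + 1 by omega, show e + 4 - 1 = e + 3 by omega]
          nlinarith
        _ = (e + 4 - 1) * D := rfl
    have hdvd := dvd_homogeneousComponent_of_sub_C_dvd hom (by omega) hΩ
      (hf.dvd_sub_aeval_pderiv k) ((totalDegree_sub _ _).trans (max_le hbr.le hdeg))
    rwa [map_sub, hlead, homogeneousComponent_eq_zero _ _ hbr, zero_sub, dvd_neg] at hdvd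
  have hle : jacobianIdeal Ω ≤ (Ideal.span {Ω}).comap (aeval (R := L) lead) := by
    rw [jacobianIdeal, Ideal.span_le]
    rintro _ ⟨k, rfl⟩
    exact Ideal.mem_span_singleton.2 (hpderiv k)
  obtain ⟨N, hN⟩ := hX i₀
  have hpow : Ω ∣ lead i₀ ^ N := by
    simpa [Ideal.mem_span_singleton] using hle hN
  exact hred i₀ (by omega) ((squarefree_of_X_mem_radical hX).isRadical _ _ hpow)

lemma RespectsJacBracketMod.jacBracket_eq_aeval_pderiv (hom : Ω.IsHomogeneous d) (hd : 0 < d)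
    (hΩ : Ω ≠ 0) {f : Fin 3 → MvPolynomial (Fin 3) L}
    (hf : RespectsJacBracketMod Ω (Ω - C ξ) f) (hdeg : ∀ i, (f i).totalDegree ≤ 1) (k : Fin 3) :
    jacBracket Ω (f (k + 1)) (f (k + 2)) = aeval f (pderiv k Ω) := by
  refine sub_eq_zero.1 (eq_zero_of_sub_C_dvd hom hd hΩ (hf.dvd_sub_aeval_pderiv k) ?_)
  have haeval := (totalDegree_aeval_le_and_homogeneousComponent_aeval hdeg
    (hom.pderiv (i := k))).1
  have hbr := totalDegree_jacBracket_le Ω (f (k + 1)) (f (k + 2))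
  have h₁ := hdeg (k + 1)
  have h₂ := hdeg (k + 2)
  have hsub := totalDegree_sub (jacBracket Ω (f (k + 1)) (f (k + 2))) (aeval f (pderiv k Ω))
  rw [hom.totalDegree hΩ] at hbr
  omega

/-- The translation part is a critical point of `Ω`: evaluate the brackets at the origin. -/
lemma eq_zero_of_jacBracket_eq_aeval_pderiv (hom : Ω.IsHomogeneous d) (hd : 1 < d)
    (hΩ : IsNonsingular Ω) {g : Fin 3 → MvPolynomial (Fin 3) L} {M : Matrix (Fin 3) (Fin 3) L}
    {v : Fin 3 → L} (hg : ∀ i, g i = M.toMvPolynomial i + C (v i))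
    (h : ∀ k, jacBracket Ω (g (k + 1)) (g (k + 2)) = aeval g (pderiv k Ω)) : v = 0 := by
  refine hΩ v fun k => ?_
  have hpderiv (j : Fin 3) : eval (0 : Fin 3 → L) (pderiv j Ω) = 0 := by
    simpa [zero_pow (show d - 1 ≠ 0 by omega)] using
      eval_smul_of_isHomogeneous (hom.pderiv (i := j)) (0 : L) 0
  have hv : (fun i => eval (0 : Fin 3 → L) (g i)) = v := by
    ext i
    rw [hg, map_add, toMvPolynomial_eval_eq_apply, eval_C, mulVec_zero, Pi.zero_apply, zero_add]
  have hcomp := comp_aeval_apply g (aeval (R := L) (0 : Fin 3 → L)) (pderiv k Ω)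
  simp only [aeval_eq_eval, hv] at hcomp
  rw [← hcomp, ← h k, jacBracket_eq]
  simp only [map_add, map_mul, hpderiv, mul_zero, add_zero]

lemma det_ne_zero_of_sub_C_dvd (hom : Ω.IsHomogeneous d) (hd : 1 < d) (hΩ : Ω ≠ 0)
    {M : Matrix (Fin 3) (Fin 3) L} (hinj : ∀ p, Ω - C ξ ∣ linSubst M p → Ω - C ξ ∣ p) :
    M.det ≠ 0 := by
  intro hdet
  obtain ⟨c, hc, hcM⟩ := exists_vecMul_eq_zero_iff.2 hdet
  have hform : linSubst M ((replicateRow Unit c).toMvPolynomial ()) = 0 := by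
    rw [← linSubst_X, ← linSubst_mul, ← replicateRow_vecMul, hcM, linSubst_X]
    simp [toMvPolynomial]
  have hzero := eq_zero_of_sub_C_dvd hom (by omega) hΩ (hinj _ (hform ▸ dvd_zero _))
    (((toMvPolynomial_isHomogeneous _ _).totalDegree_le).trans_lt hd)
  refine hc (funext fun j => C_injective (Fin 3) L ?_)
  rw [Pi.zero_apply, C_0, ← map_zero (pderiv j), ← hzero, pderiv_toMvPolynomial, replicateRow_apply]

theorem exists_preservesUpToDet_of_respectsJacBracketMod [CharZero L] (hom : Ω.IsHomogeneous d)
    (hd : 4 ≤ d) (hX : ∀ i, X i ∈ (jacobianIdeal Ω).radical)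
    {f : Fin 3 → MvPolynomial (Fin 3) L} (hf : RespectsJacBracketMod Ω (Ω - C ξ) f)
    (hinj : ∀ p, Ω - C ξ ∣ aeval f p → Ω - C ξ ∣ p) :
    ∃ M : Matrix (Fin 3) (Fin 3) L, M.det ≠ 0 ∧ PreservesUpToDet Ω M ∧
      ∀ i, Ω - C ξ ∣ f i - M.toMvPolynomial i := by
  have hns := isNonsingular_of_X_mem_radical hX
  choose g hfg hred using fun i => exists_sub_C_dvd_sub_and_not_dvd_homogeneousComponent hom
    (by omega) hns.ne_zero ξ (f i)
  have hg := hf.congr hfg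
  have hdeg := hg.totalDegree_le_one hom hd hX hred
  have hbr := hg.jacBracket_eq_aeval_pderiv hom (by omega) hns.ne_zero hdeg
  obtain ⟨M, v, hM⟩ := exists_eq_toMvPolynomial_add_C hdeg
  obtain rfl := eq_zero_of_jacBracket_eq_aeval_pderiv hom (by omega) hns hM hbr
  obtain rfl : g = M.toMvPolynomial := funext fun i => by simpa using hM i
  refine ⟨M, det_ne_zero_of_sub_C_dvd hom (by omega) hns.ne_zero fun p hp => hinj p ?_,
    preservesUpToDet_of_jacBracket_eq hom (by omega) hbr, hfg⟩
  exact (dvd_iff_dvd_of_dvd_sub (dvd_aeval_sub_aeval hfg p)).2 hp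

end Linearity

end JacobianPotential

namespace PoissonStructure

open MvPolynomial

variable {k R A : Type*} [CommRing k] [CommRing R] [CommRing A] [Algebra k A] [Algebra R A]
  (P : PoissonStructure k A)

lemma add_right (a b c : A) : P.bracket a (b + c) = P.bracket a b + P.bracket a c := by
  rw [P.antisymm, P.add_left, P.antisymm b, P.antisymm c, neg_add, neg_neg, neg_neg]

lemma bracket_one (a : A) : P.bracket a 1 = 0 := by
  simpa using P.leibniz a 1 1

lemma one_bracket (a : A) : P.bracket 1 a = 0 := by
  rw [P.antisymm, bracket_one, neg_zero]

/-- The Hamiltonian derivation `{a, -}` of an element `a` commuting with the scalars `R`. Here `R`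
may be larger than the base ring `k` of the Poisson structure. -/
def hamiltonian (R : Type*) [CommRing R] [Algebra R A] (a : A)
    (ha : ∀ r : R, P.bracket a (algebraMap R A r) = 0) : Derivation R A A :=
  Derivation.mk'
    { toFun := P.bracket a
      map_add' := P.add_right a
      map_smul' := fun r b => by simp [Algebra.smul_def, P.leibniz, ha] }
    fun b c => by simp [P.leibniz, mul_comm, add_comm]

variable {σ : Type*} [Fintype σ] {P}

lemma bracket_aeval_right {a : A} (ha : ∀ r : R, P.bracket a (algebraMap R A r) = 0) (y : σ → A)
    (g : MvPolynomial σ R) :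
    P.bracket a (aeval y g) = ∑ j, aeval y (pderiv j g) * P.bracket a (y j) :=
  JacobianPotential.derivation_aeval (P.hamiltonian R a ha) y g

lemma bracket_aeval_aeval {y : σ → A} (hy : ∀ i (r : R), P.bracket (y i) (algebraMap R A r) = 0)
    {f : MvPolynomial σ R} (hf : ∀ r : R, P.bracket (aeval y f) (algebraMap R A r) = 0)
    (g : MvPolynomial σ R) :
    P.bracket (aeval y f) (aeval y g) =
      ∑ i, ∑ j, aeval y (pderiv i f) * aeval y (pderiv j g) * P.bracket (y i) (y j) := by
  have hleft (j : σ) : P.bracket (aeval y f) (y j) =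
      ∑ i, aeval y (pderiv i f) * P.bracket (y i) (y j) := by
    rw [P.antisymm, bracket_aeval_right (hy j), ← Finset.sum_neg_distrib]
    simp only [← mul_neg, ← P.antisymm]
  rw [bracket_aeval_right hf, Finset.sum_comm]
  simp only [hleft, Finset.mul_sum, mul_left_comm, mul_assoc]

end PoissonStructure

namespace PQuot

variable {𝕜 : Type*} [CommRing 𝕜] (Ω : MvPolynomial (Fin 3) 𝕜) (ξ : 𝕜)

/-- The projection `PQuot.mk` as an algebra homomorphism. -/
noncomputable def mkₐ : MvPolynomial (Fin 3) 𝕜 →ₐ[𝕜] PQuot 𝕜 Ω ξ :=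
  Ideal.Quotient.mkₐ 𝕜 (Ideal.span {Ω - MvPolynomial.C ξ})

lemma mkₐ_surjective : Function.Surjective (mkₐ Ω ξ) :=
  Ideal.Quotient.mk_surjective

lemma ker_mkₐ : RingHom.ker (mkₐ Ω ξ) = Ideal.span {Ω - MvPolynomial.C ξ} :=
  Ideal.mk_ker

end PQuot

namespace JacobianPotential

open MvPolynomial Matrix

section BaseChange

variable {𝕜 K : Type*} [Field 𝕜] [Field K] [Algebra 𝕜 K] (Ω : MvPolynomial (Fin 3) 𝕜) (ξ : 𝕜)

variable (K) in
/-- The presentation `K[x, y, z] → K ⊗ P_{Ω-ξ}`, the base change of `PQuot.mk`. -/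
noncomputable def baseChangeMk : MvPolynomial (Fin 3) K →ₐ[K] K ⊗[𝕜] PQuot 𝕜 Ω ξ :=
  (Algebra.TensorProduct.map (AlgHom.id K K) (PQuot.mkₐ Ω ξ)).comp
    (algebraTensorAlgEquiv 𝕜 K).symm.toAlgHom

lemma baseChangeMk_map (p : MvPolynomial (Fin 3) 𝕜) :
    baseChangeMk K Ω ξ (MvPolynomial.map (algebraMap 𝕜 K) p) = 1 ⊗ₜ PQuot.mk Ω ξ p :=
  congrArg (Algebra.TensorProduct.map (AlgHom.id K K) _) (algebraTensorAlgEquiv_symm_map 𝕜 K p)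

lemma baseChangeMk_X (i : Fin 3) : baseChangeMk K Ω ξ (X i) = 1 ⊗ₜ PQuot.mk Ω ξ (X i) := by
  rw [← baseChangeMk_map, map_X]

lemma baseChangeMk_eq_aeval :
    baseChangeMk K Ω ξ = aeval fun i => baseChangeMk K Ω ξ (X i) :=
  aeval_unique _

lemma baseChangeMk_surjective : Function.Surjective (baseChangeMk K Ω ξ) := by
  rw [baseChangeMk, AlgHom.coe_comp]
  refine Function.Surjective.comp ?_ (algebraTensorAlgEquiv 𝕜 K).symm.surjective
  exact Algebra.TensorProduct.map_surjective (AlgHom.id K K) _ Function.surjective_id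
    (PQuot.mkₐ_surjective Ω ξ)

lemma baseChangeMk_eq_zero_iff {p : MvPolynomial (Fin 3) K} :
    baseChangeMk K Ω ξ p = 0 ↔
      MvPolynomial.map (algebraMap 𝕜 K) Ω - C (algebraMap 𝕜 K ξ) ∣ p := by
  have hker := Algebra.TensorProduct.lTensor_ker (A := K) _ (PQuot.mkₐ_surjective Ω ξ)
  rw [PQuot.ker_mkₐ, Ideal.map_span, Set.image_singleton] at hker
  have hw : (algebraTensorAlgEquiv 𝕜 K).symm
      (MvPolynomial.map (algebraMap 𝕜 K) Ω - C (algebraMap 𝕜 K ξ)) = 1 ⊗ₜ (Ω - C ξ) := by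
    rw [← map_C, ← map_sub, algebraTensorAlgEquiv_symm_map]
  rw [← map_dvd_iff (algebraTensorAlgEquiv 𝕜 K).symm, hw, ← Ideal.mem_span_singleton]
  exact Ideal.ext_iff.1 hker _

lemma baseChangeMk_eq_iff {p q : MvPolynomial (Fin 3) K} :
    baseChangeMk K Ω ξ p = baseChangeMk K Ω ξ q ↔
      MvPolynomial.map (algebraMap 𝕜 K) Ω - C (algebraMap 𝕜 K ξ) ∣ p - q := by
  rw [← baseChangeMk_eq_zero_iff, map_sub, sub_eq_zero]

variable {Ω ξ} {PK : PoissonStructure 𝕜 K} {P : PoissonStructure 𝕜 (PQuot 𝕜 Ω ξ)}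
  {PT : PoissonStructure 𝕜 (K ⊗[𝕜] PQuot 𝕜 Ω ξ)}

lemma bracket_baseChangeMk_X_algebraMap (hPT : IsTensorBracket PK P PT) (i : Fin 3) (s : K) :
    PT.bracket (baseChangeMk K Ω ξ (X i)) (algebraMap K _ s) = 0 := by
  rw [baseChangeMk_X, Algebra.TensorProduct.algebraMap_apply, Algebra.algebraMap_self_apply, hPT,
    PK.one_bracket, P.bracket_one, TensorProduct.zero_tmul, TensorProduct.tmul_zero, add_zero]

lemma bracket_baseChangeMk_X_X (hP : IsInducedBracket Ω ξ P) (hPT : IsTensorBracket PK P PT)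
    (i j : Fin 3) : PT.bracket (baseChangeMk K Ω ξ (X i)) (baseChangeMk K Ω ξ (X j)) =
      baseChangeMk K Ω ξ (jacBracket (MvPolynomial.map (algebraMap 𝕜 K) Ω) (X i) (X j)) := by
  rw [baseChangeMk_X, baseChangeMk_X, hPT, PK.bracket_one, TensorProduct.zero_tmul, zero_add,
    hP, mul_one, ← baseChangeMk_map, map_jacBracket, map_X, map_X]

lemma bracket_baseChangeMk (hP : IsInducedBracket Ω ξ P) (hPT : IsTensorBracket PK P PT)
    {f : MvPolynomial (Fin 3) K}
    (hf : ∀ s : K, PT.bracket (baseChangeMk K Ω ξ f) (algebraMap K _ s) = 0)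
    (g : MvPolynomial (Fin 3) K) :
    PT.bracket (baseChangeMk K Ω ξ f) (baseChangeMk K Ω ξ g) =
      baseChangeMk K Ω ξ (jacBracket (MvPolynomial.map (algebraMap 𝕜 K) Ω) f g) := by
  have haeval (p : MvPolynomial (Fin 3) K) :
      aeval (fun i => baseChangeMk K Ω ξ (X i)) p = baseChangeMk K Ω ξ p := by
    rw [← baseChangeMk_eq_aeval]
  have hbr := PoissonStructure.bracket_aeval_aeval (bracket_baseChangeMk_X_algebraMap hPT)
    (f := f) (by rwa [haeval]) g
  simp only [haeval, bracket_baseChangeMk_X_X hP hPT, ← map_mul, ← map_sum] at hbr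
  rw [hbr, ← jacBracket_eq_sum]

/-- As `Φ` fixes `K`, the values of `Φ` on the coordinates commute with `K`, so their brackets can
be computed in `K[x, y, z]`. -/
lemma exists_mem_potentialGroup_of_map_bracket_eq [CharZero K] (hP : IsInducedBracket Ω ξ P)
    (hPT : IsTensorBracket PK P PT) {d : ℕ} (hom : Ω.IsHomogeneous d) (hd : 4 ≤ d)
    (hX : ∀ i, X i ∈ (jacobianIdeal Ω).radical)
    {Φ : (K ⊗[𝕜] PQuot 𝕜 Ω ξ) →ₐ[K] K ⊗[𝕜] PQuot 𝕜 Ω ξ} (hinj : Function.Injective Φ)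
    (hΦ : ∀ a b, Φ (PT.bracket a b) = PT.bracket (Φ a) (Φ b)) :
    ∃ g ∈ potentialGroup (MvPolynomial.map (algebraMap 𝕜 K) Ω),
      ∀ p, Φ (baseChangeMk K Ω ξ p) = baseChangeMk K Ω ξ (linSubst g.val p) := by
  choose f hf using fun i => baseChangeMk_surjective Ω ξ (Φ (baseChangeMk K Ω ξ (X i)))
  have hsubst (g : Fin 3 → MvPolynomial (Fin 3) K)
      (hg : ∀ i, baseChangeMk K Ω ξ (g i) = Φ (baseChangeMk K Ω ξ (X i)))
      (p : MvPolynomial (Fin 3) K) :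
      Φ (baseChangeMk K Ω ξ p) = baseChangeMk K Ω ξ (aeval g p) := by
    have hcomp : Φ.comp (baseChangeMk K Ω ξ) = (baseChangeMk K Ω ξ).comp (aeval g) :=
      algHom_ext fun i => by simp [hg]
    exact DFunLike.congr_fun hcomp p
  have hcentral (i : Fin 3) (s : K) :
      PT.bracket (baseChangeMk K Ω ξ (f i)) (algebraMap K _ s) = 0 := by
    rw [hf, ← Φ.commutes s, ← hΦ, bracket_baseChangeMk_X_algebraMap hPT, map_zero]
  have hrespects : RespectsJacBracketMod (MvPolynomial.map (algebraMap 𝕜 K) Ω)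
      (MvPolynomial.map (algebraMap 𝕜 K) Ω - C (algebraMap 𝕜 K ξ)) f := by
    intro i j
    rw [← baseChangeMk_eq_iff, ← bracket_baseChangeMk hP hPT (hcentral i), ← hsubst f hf,
      ← bracket_baseChangeMk_X_X hP hPT, hf, hf, hΦ]
  obtain ⟨M, hdet, hM, hfM⟩ := exists_preservesUpToDet_of_respectsJacBracketMod
    (hom.map (algebraMap 𝕜 K)) hd (fun i => X_mem_radical_jacobianIdeal_map _ (hX i)) hrespects
    fun p hp => by
      rw [← baseChangeMk_eq_zero_iff, ← hsubst f hf, map_eq_zero_iff Φ hinj] at hp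
      exact (baseChangeMk_eq_zero_iff Ω ξ).1 hp
  refine ⟨GeneralLinearGroup.mkOfDetNeZero M hdet, hM, hsubst _ fun i => ?_⟩
  rw [← hf, eq_comm, baseChangeMk_eq_iff]
  exact hfM i

end BaseChange

section GroundField

variable {L : Type*} [Field L]

lemma exists_injective_potentialGroup_map {σ L' : Type*} [Fintype σ] [DecidableEq σ] [Field L']
    (φ : L →+* L') (Ω : MvPolynomial σ L) : ∃ F : potentialGroup Ω →
      potentialGroup (MvPolynomial.map φ Ω), Function.Injective F := by
  refine ⟨fun g => ⟨GeneralLinearGroup.map φ g.1, g.2.map φ⟩, fun g h hgh => ?_⟩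
  have hval := congrArg (fun u => u.1.val) hgh
  exact Subtype.ext (Units.ext (Matrix.map_injective φ.injective hval))

lemma finite_and_card_potentialGroup_le [CharZero L] {Ω : MvPolynomial (Fin 3) L} {n : ℕ}
    (hom : Ω.IsHomogeneous (n + 3)) (hn : 0 < n) (hX : ∀ i, X i ∈ (jacobianIdeal Ω).radical) :
    Finite (potentialGroup Ω) ∧ Nat.card (potentialGroup Ω) ≤ 42 * (n + 3) * n ^ 2 := by
  let φ := algebraMap L (AlgebraicClosure L)
  have hns := isNonsingular_of_X_mem_radical fun i => X_mem_radical_jacobianIdeal_map φ (hX i)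
  have := finite_potentialGroup (hom.map φ) (by omega) (by simp [hn.ne']) hns
  obtain ⟨F, hF⟩ := exists_injective_potentialGroup_map φ Ω
  exact ⟨Finite.of_injective F hF, (Nat.card_le_card_of_injective F hF).trans
    (card_potentialGroup_le (hom.map φ) hn hns)⟩

lemma X_mem_radical_of_hasIsolatedSingularity {Ω : MvPolynomial (Fin 3) L} {d : ℕ}
    (hom : Ω.IsHomogeneous d) (hΩ : HasIsolatedSingularity Ω) (i : Fin 3) :
    X i ∈ (jacobianIdeal Ω).radical := by
  have hspan : jacobianIdeal Ω = Ideal.span {pderiv 0 Ω, pderiv 1 Ω, pderiv 2 Ω} := by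
    rw [jacobianIdeal]
    congr 1
    ext p
    simp [Fin.exists_fin_succ, eq_comm]
  have : Module.Finite L (MvPolynomial (Fin 3) L ⧸ jacobianIdeal Ω) := hspan ▸ hΩ
  exact X_mem_radical_jacobianIdeal hom i

end GroundField

end JacobianPotential

open JacobianPotential in
theorem poissonAut_baseChange_potential_card_le_general
    {𝕜 K : Type*} [Field 𝕜] [CharZero 𝕜] [Field K] [Algebra 𝕜 K] (PK : PoissonStructure 𝕜 K)
    (Ω : MvPolynomial (Fin 3) 𝕜) (d : ℕ) (hhom : Ω.IsHomogeneous d) (hd : 4 ≤ d)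
    (hiso : HasIsolatedSingularity Ω) (ξ : 𝕜)
    (P : PoissonStructure 𝕜 (PQuot 𝕜 Ω ξ)) (hP : IsInducedBracket Ω ξ P)
    (PT : PoissonStructure 𝕜 (K ⊗[𝕜] PQuot 𝕜 Ω ξ)) (hPT : IsTensorBracket PK P PT) :
    Finite {f : (K ⊗[𝕜] PQuot 𝕜 Ω ξ) ≃ₐ[𝕜] K ⊗[𝕜] PQuot 𝕜 Ω ξ //
      (∀ a b, f (PT.bracket a b) = PT.bracket (f a) (f b)) ∧
      ∀ s : K, f (s ⊗ₜ[𝕜] 1) = s ⊗ₜ[𝕜] 1} ∧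
    Nat.card {f : (K ⊗[𝕜] PQuot 𝕜 Ω ξ) ≃ₐ[𝕜] K ⊗[𝕜] PQuot 𝕜 Ω ξ //
      (∀ a b, f (PT.bracket a b) = PT.bracket (f a) (f b)) ∧
      ∀ s : K, f (s ⊗ₜ[𝕜] 1) = s ⊗ₜ[𝕜] 1} ≤ 42 * d * (d - 3) ^ 2 := by
  have : CharZero K := charZero_of_injective_algebraMap (algebraMap 𝕜 K).injective
  have hX := X_mem_radical_of_hasIsolatedSingularity hhom hiso
  choose g hg hact using fun f : {f : (K ⊗[𝕜] PQuot 𝕜 Ω ξ) ≃ₐ[𝕜] K ⊗[𝕜] PQuot 𝕜 Ω ξ //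
      (∀ a b, f (PT.bracket a b) = PT.bracket (f a) (f b)) ∧
      ∀ s : K, f (s ⊗ₜ[𝕜] 1) = s ⊗ₜ[𝕜] 1} =>
    exists_mem_potentialGroup_of_map_bracket_eq hP hPT hhom hd hX
      (Φ := { (f.1 : (K ⊗[𝕜] PQuot 𝕜 Ω ξ) →+* K ⊗[𝕜] PQuot 𝕜 Ω ξ) with commutes' := f.2.2 })
      f.1.injective f.2.1
  have hinj : Function.Injective fun f => (⟨g f, hg f⟩ : potentialGroup _) := by
    intro f₁ f₂ h
    refine Subtype.ext (AlgEquiv.ext fun t => ?_)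
    obtain ⟨p, rfl⟩ := baseChangeMk_surjective Ω ξ t
    have hg₁₂ : g f₁ = g f₂ := congrArg Subtype.val h
    exact (hact f₁ p).trans (hg₁₂ ▸ (hact f₂ p).symm)
  obtain ⟨n, rfl⟩ := Nat.exists_eq_add_of_le' (show 3 ≤ d by omega)
  obtain ⟨hfin, hcard⟩ := finite_and_card_potentialGroup_le
    (hhom.map (algebraMap 𝕜 K)) (by omega)
    fun i => X_mem_radical_jacobianIdeal_map _ (hX i)
  exact ⟨Finite.of_injective _ hinj, (Nat.card_le_card_of_injective _ hinj).trans hcard⟩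

/-- Lemma 3.5: for an i.s. potential `Ω` of degree `d ≥ 5` and a Poisson field `K`, the group
of Poisson algebra automorphisms of `K ⊗ P_{Ω-ξ}` fixing `K` pointwise has order at most
`42·d·(d-3)²`. -/
theorem poissonAut_baseChange_potential_card_le
    {𝕜 K : Type*} [Field 𝕜] [IsAlgClosed 𝕜] [CharZero 𝕜]
    [Field K] [Algebra 𝕜 K] (PK : PoissonStructure 𝕜 K)
    (Ω : MvPolynomial (Fin 3) 𝕜) (d : ℕ) (hhom : Ω.IsHomogeneous d) (hd : 5 ≤ d)
    (hiso : HasIsolatedSingularity Ω) (ξ : 𝕜)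
    (P : PoissonStructure 𝕜 (PQuot 𝕜 Ω ξ)) (hP : IsInducedBracket Ω ξ P)
    (PT : PoissonStructure 𝕜 (K ⊗[𝕜] PQuot 𝕜 Ω ξ)) (hPT : IsTensorBracket PK P PT) :
    Finite {f : (K ⊗[𝕜] PQuot 𝕜 Ω ξ) ≃ₐ[𝕜] K ⊗[𝕜] PQuot 𝕜 Ω ξ //
      (∀ a b, f (PT.bracket a b) = PT.bracket (f a) (f b)) ∧
      ∀ s : K, f (s ⊗ₜ[𝕜] 1) = s ⊗ₜ[𝕜] 1} ∧
    Nat.card {f : (K ⊗[𝕜] PQuot 𝕜 Ω ξ) ≃ₐ[𝕜] K ⊗[𝕜] PQuot 𝕜 Ω ξ //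
      (∀ a b, f (PT.bracket a b) = PT.bracket (f a) (f b)) ∧
      ∀ s : K, f (s ⊗ₜ[𝕜] 1) = s ⊗ₜ[𝕜] 1} ≤ 42 * d * (d - 3) ^ 2 := by
  exact poissonAut_baseChange_potential_card_le_general PK Ω d hhom (by omega) hiso ξ P hP PT hPT
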